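/- arXiv:0901.1280 — 3 statements merged into one kernel-verified Lean document; each statement's English description precedes it below -/
import Mathlib

section
/- Quantum mutual information satisfies I(∑_k p_k ρ^k) ≤ ∑_k p_k I(ρ^k) + S({p_k}) for any finite convex mixture of bipartite density operators ρ^k with weights p_k, where S({p_k}) is the Shannon entropy of the weights. -/
open scoped BigOperators Kronecker ComplexOrder
open Matrix Filter Topology

noncomputable section

/-- Shannon entropy (log base 2) of a finitely supported distribution. -/
def shannon {I : Type} [Fintype I] (p : I → ℝ) : ℝ := -∑ i, p i * Real.logb 2 (p i)

/-- `p` is a probability distribution. -/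
def IsProbDist {I : Type} [Fintype I] (p : I → ℝ) : Prop :=
  (∀ i, 0 ≤ p i) ∧ ∑ i, p i = 1

/-- First marginal of a joint distribution. -/
def margA {I J : Type} [Fintype J] (p : I × J → ℝ) : I → ℝ := fun i => ∑ j, p (i, j)

/-- Second marginal of a joint distribution. -/
def margB {I J : Type} [Fintype I] (p : I × J → ℝ) : J → ℝ := fun j => ∑ i, p (i, j)

/-- Classical mutual information of a joint distribution. -/
def classMI {I J : Type} [Fintype I] [Fintype J] (p : I × J → ℝ) : ℝ :=
  shannon (margA p) + shannon (margB p) - shannon p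

/-- Kullback-Leibler divergence (log base 2). -/
def klDiv {I : Type} [Fintype I] (p q : I → ℝ) : ℝ := ∑ i, p i * Real.logb 2 (p i / q i)

/-- A density operator: positive semidefinite with unit trace. -/
def IsDensity {n : Type} [Fintype n] (ρ : Matrix n n ℂ) : Prop :=
  ρ.PosSemidef ∧ ρ.trace = 1

/-- Von Neumann entropy (log base 2) via the eigenvalues of a Hermitian matrix. -/
def vnEntropy {n : Type} [Fintype n] [DecidableEq n] (ρ : Matrix n n ℂ) : ℝ :=
  if h : ρ.IsHermitian then -∑ i, h.eigenvalues i * Real.logb 2 (h.eigenvalues i) else 0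

/-- Partial trace over the second tensor factor. -/
def ptraceB {A B : Type} [Fintype B] (ρ : Matrix (A × B) (A × B) ℂ) : Matrix A A ℂ :=
  Matrix.of fun a a' => ∑ b, ρ (a, b) (a', b)

/-- Partial trace over the first tensor factor. -/
def ptraceA {A B : Type} [Fintype A] (ρ : Matrix (A × B) (A × B) ℂ) : Matrix B B ℂ :=
  Matrix.of fun b b' => ∑ a, ρ (a, b) (a, b')

/-- Quantum mutual information I(A:B) = S(ρ_A) + S(ρ_B) - S(ρ_{AB}). -/
def mutInfo {A B : Type} [Fintype A] [Fintype B] [DecidableEq A] [DecidableEq B]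
    (ρ : Matrix (A × B) (A × B) ℂ) : ℝ :=
  vnEntropy (ptraceB ρ) + vnEntropy (ptraceA ρ) - vnEntropy ρ

/-- Tensor product of two bipartite states, with the cut (A₁A₂ : B₁B₂). -/
def tens2 {A₁ B₁ A₂ B₂ : Type}
    (ρ : Matrix (A₁ × B₁) (A₁ × B₁) ℂ) (σ : Matrix (A₂ × B₂) (A₂ × B₂) ℂ) :
    Matrix ((A₁ × A₂) × (B₁ × B₂)) ((A₁ × A₂) × (B₁ × B₂)) ℂ :=
  Matrix.of fun x y => ρ (x.1.1, x.2.1) (y.1.1, y.2.1) * σ (x.1.2, x.2.2) (y.1.2, y.2.2)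

/-- n-fold tensor power of a bipartite state, with the A^n : B^n cut. -/
def tpow {A B : Type} (σ : Matrix (A × B) (A × B) ℂ) (n : ℕ) :
    Matrix ((Fin n → A) × (Fin n → B)) ((Fin n → A) × (Fin n → B)) ℂ :=
  Matrix.of fun x y => ∏ i, σ (x.1 i, x.2 i) (y.1 i, y.2 i)

/-- Reduced state of the k-th copy (partial trace over all other copies). -/
def copyMarginal {A B : Type} [Fintype A] [Fintype B] [DecidableEq A] [DecidableEq B] {n : ℕ}
    (ρ : Matrix ((Fin n → A) × (Fin n → B)) ((Fin n → A) × (Fin n → B)) ℂ) (k : Fin n) :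
    Matrix (A × B) (A × B) ℂ :=
  Matrix.of fun x y => ∑ f : Fin n → A, ∑ g : Fin n → B,
    if f k = x.1 ∧ g k = x.2 then
      ρ (f, g) (Function.update f k y.1, Function.update g k y.2) else 0

/-- `τ` is an n-copy broadcast state of `ρ`. -/
def IsBroadcast {A B : Type} [Fintype A] [Fintype B] [DecidableEq A] [DecidableEq B] (n : ℕ)
    (τ : Matrix ((Fin n → A) × (Fin n → B)) ((Fin n → A) × (Fin n → B)) ℂ)
    (ρ : Matrix (A × B) (A × B) ℂ) : Prop :=
  IsDensity τ ∧ ∀ k : Fin n, copyMarginal τ k = ρ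

/-- n-copy broadcast mutual information (I_b)_n. -/
def Ib {A B : Type} [Fintype A] [Fintype B] [DecidableEq A] [DecidableEq B] (n : ℕ)
    (ρ : Matrix (A × B) (A × B) ℂ) : ℝ :=
  sInf {x | ∃ τ, IsBroadcast n τ ρ ∧ x = mutInfo τ}

/-- Partial trace of a state on (A A' : B B') over the primed (ancilla) systems. -/
def ptracePrime {A B A' B' : Type} [Fintype A'] [Fintype B']
    (τ : Matrix ((A × A') × (B × B')) ((A × A') × (B × B')) ℂ) :
    Matrix (A × B) (A × B) ℂ :=
  Matrix.of fun x y => ∑ a', ∑ b', τ ((x.1, a'), (x.2, b')) ((y.1, a'), (y.2, b'))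

/-- Partial trace of a state on (A A' : B B') over the unprimed systems. -/
def ptraceMain {A B A' B' : Type} [Fintype A] [Fintype B]
    (τ : Matrix ((A × A') × (B × B')) ((A × A') × (B × B')) ℂ) :
    Matrix (A' × B') (A' × B') ℂ :=
  Matrix.of fun x y => ∑ a, ∑ b, τ ((a, x.1), (b, x.2)) ((a, y.1), (b, y.2))

/-- Conditional entanglement of mutual information (CEMI). -/
def EI {A B : Type} [Fintype A] [Fintype B] [DecidableEq A] [DecidableEq B]
    (ρ : Matrix (A × B) (A × B) ℂ) : ℝ :=
  (1 / 2) * sInf {x | ∃ (dA dB : ℕ)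
    (τ : Matrix ((A × Fin dA) × (B × Fin dB)) ((A × Fin dA) × (B × Fin dB)) ℂ),
    IsDensity τ ∧ ptracePrime τ = ρ ∧ x = mutInfo τ - mutInfo (ptraceMain τ)}

/-- Classical squashed entanglement, via the ensemble formula. -/
def EsqC {A B : Type} [Fintype A] [Fintype B] [DecidableEq A] [DecidableEq B]
    (ρ : Matrix (A × B) (A × B) ℂ) : ℝ :=
  (1 / 2) * sInf {x | ∃ (m : ℕ) (p : Fin m → ℝ) (σ : Fin m → Matrix (A × B) (A × B) ℂ),
    (∀ k, 0 ≤ p k) ∧ (∑ k, p k = 1) ∧ (∀ k, IsDensity (σ k)) ∧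
    (∑ k, (p k : ℂ) • σ k = ρ) ∧ x = ∑ k, p k * mutInfo (σ k)}

/-- Separability of a bipartite state. -/
def Separable {A B : Type} [Fintype A] [Fintype B]
    (ρ : Matrix (A × B) (A × B) ℂ) : Prop :=
  ∃ (m : ℕ) (p : Fin m → ℝ) (σA : Fin m → Matrix A A ℂ) (σB : Fin m → Matrix B B ℂ),
    (∀ k, 0 ≤ p k) ∧ (∑ k, p k = 1) ∧ (∀ k, IsDensity (σA k) ∧ IsDensity (σB k)) ∧
    ρ = ∑ k, (p k : ℂ) • (σA k ⊗ₖ σB k)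

/-- A finite POVM. -/
def IsPOVM {A ι : Type} [Fintype A] [Fintype ι] [DecidableEq A]
    (M : ι → Matrix A A ℂ) : Prop :=
  (∀ i, (M i).PosSemidef) ∧ ∑ i, M i = 1

/-- Outcome distribution of a local product measurement. -/
def measProb {A B ι κ : Type} [Fintype A] [Fintype B]
    (M : ι → Matrix A A ℂ) (N : κ → Matrix B B ℂ)
    (ρ : Matrix (A × B) (A × B) ℂ) : ι × κ → ℝ :=
  fun x => (((M x.1 ⊗ₖ N x.2) * ρ).trace).re

/-- Completeness condition for a family of Kraus operators. -/
def IsKraus {A A' ι : Type} [Fintype A] [Fintype A'] [Fintype ι] [DecidableEq A]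
    (K : ι → Matrix A' A ℂ) : Prop :=
  ∑ i, (K i)ᴴ * K i = 1

/-- Action of the product channel Λ_A ⊗ Λ_B (given by Kraus operators) on a bipartite state. -/
def localApply {A B A' B' ι κ : Type} [Fintype A] [Fintype B] [Fintype ι] [Fintype κ]
    (K : ι → Matrix A' A ℂ) (L : κ → Matrix B' B ℂ)
    (ρ : Matrix (A × B) (A × B) ℂ) : Matrix (A' × B') (A' × B') ℂ :=
  ∑ i, ∑ j, (K i ⊗ₖ L j) * ρ * (K i ⊗ₖ L j)ᴴ

/-- Measured relative entropy distance to separable states (with optimization over local POVMs). -/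
def measREE {A B : Type} [Fintype A] [Fintype B] [DecidableEq A] [DecidableEq B]
    (ρ : Matrix (A × B) (A × B) ℂ) : ℝ :=
  sInf {x | ∃ σ : Matrix (A × B) (A × B) ℂ, IsDensity σ ∧ Separable σ ∧
    x = sSup {y | ∃ (m m' : ℕ) (M : Fin m → Matrix A A ℂ) (N : Fin m' → Matrix B B ℂ),
      IsPOVM M ∧ IsPOVM N ∧ y = klDiv (measProb M N ρ) (measProb M N σ)}}

theorem aux_calc {ι κ : Type} [Fintype ι] [Fintype κ] (w r s : ι → ℝ) (w' r' s' : κ → ℝ)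
    (hr : ∀ i, 0 ≤ r i) (hs : ∀ i, 0 ≤ s i) (hz : ∀ i, s i = 0 → w i * r i = 0)
    (hr' : ∀ i, 0 ≤ r' i) (hs' : ∀ i, 0 ≤ s' i) (hz' : ∀ i, s' i = 0 → w' i * r' i = 0)
    (htr : ∑ i, w i * r i = ∑ i, w' i * r' i)
    (hf : ∀ t : ℝ, 0 < t → ∑ i, w i * (r i ^ 2 / (s i + t * r i))
      ≤ ∑ i, w' i * (r' i ^ 2 / (s' i + t * r' i))) :
    ∑ i, w i * r i * (Real.log (r i) - Real.log (s i))
      ≤ ∑ i, w' i * r' i * (Real.log (r' i) - Real.log (s' i)) := by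
  have der : ∀ {ι : Type} [Fintype ι] (w r s : ι → ℝ), (∀ i, 0 ≤ r i) → (∀ i, 0 ≤ s i) →
      ∀ t : ℝ, 0 < t → HasDerivAt (fun t => ∑ i, w i * r i * Real.log (s i + t * r i))
        (∑ i, w i * (r i ^ 2 / (s i + t * r i))) t := by
    intro ι _ w r s hr hs t ht
    apply HasDerivAt.fun_sum
    intro i _
    rcases (hr i).eq_or_lt with h | h
    · simp only [← h]; simpa using hasDerivAt_const t (0:ℝ)
    · have hp : 0 < s i + t * r i := by have := hs i; positivity
      have h1 : HasDerivAt (fun t => s i + t * r i) (r i) t := by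
        simpa using ((hasDerivAt_id t).mul_const (r i)).const_add (s i)
      have e : w i * (r i ^ 2 / (s i + t * r i)) = w i * r i * (r i / (s i + t * r i)) := by ring
      rw [e]
      exact (h1.log hp.ne').const_mul (w i * r i)
  have lim0 : ∀ {ι : Type} [Fintype ι] (w r s : ι → ℝ), (∀ i, s i = 0 → w i * r i = 0) →
      Tendsto (fun t => ∑ i, w i * r i * Real.log (s i + t * r i)) (𝓝[>] 0)
        (𝓝 (∑ i, w i * r i * Real.log (s i))) := by
    intro ι _ w r s hz
    apply tendsto_finsetSum
    intro i _
    by_cases h : s i = 0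
    · simp [hz i h]
    · apply Tendsto.const_mul
      have : ContinuousAt (fun t : ℝ => Real.log (s i + t * r i)) 0 := by
        apply ContinuousAt.log
        · fun_prop
        · simpa using h
      have h2 := this.tendsto
      simp only [zero_mul, add_zero] at h2
      exact h2.mono_left nhdsWithin_le_nhds
  have limI : ∀ {ι : Type} [Fintype ι] (w r s : ι → ℝ), (∀ i, 0 ≤ r i) → (∀ i, 0 ≤ s i) →
      Tendsto (fun t => ∑ i, w i * r i * Real.log (s i + t * r i) - (∑ i, w i * r i) * Real.log t)
        atTop (𝓝 (∑ i, w i * r i * Real.log (r i))) := by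
    intro ι _ w r s hr hs
    have h0 : Tendsto (fun t : ℝ => ∑ i, w i * r i * Real.log (s i / t + r i)) atTop
        (𝓝 (∑ i, w i * r i * Real.log (r i))) := by
      apply tendsto_finsetSum
      intro i _
      rcases (hr i).eq_or_lt with h | h
      · simp [← h]
      · apply Tendsto.const_mul
        have h1 : Tendsto (fun t : ℝ => s i / t + r i) atTop (𝓝 (r i)) := by
          simpa using (tendsto_const_nhds.div_atTop tendsto_id : Tendsto (fun t : ℝ => s i / t) atTop (𝓝 0)).add_const (r i)
        exact h1.log h.ne'
    refine h0.congr' ?_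
    filter_upwards [eventually_gt_atTop 0] with t ht
    rw [Finset.sum_mul, ← Finset.sum_sub_distrib]
    apply Finset.sum_congr rfl
    intro i _
    rcases (hr i).eq_or_lt with h | h
    · simp [← h]
    · have hp : 0 < s i + t * r i := by have := hs i; positivity
      rw [← mul_sub, ← Real.log_div hp.ne' ht.ne']
      congr 2
      field_simp
  set G : ℝ → ℝ := fun t => ∑ i, w i * r i * Real.log (s i + t * r i) with hG
  set G' : ℝ → ℝ := fun t => ∑ i, w' i * r' i * Real.log (s' i + t * r' i) with hG'
  have hd : ∀ t : ℝ, 0 < t → HasDerivAt (fun t => G' t - G t) _ t :=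
    fun t ht => (der w' r' s' hr' hs' t ht).sub (der w r s hr hs t ht)
  have mono : MonotoneOn (fun t => G' t - G t) (Set.Ioi 0) := by
    apply monotoneOn_of_deriv_nonneg (convex_Ioi 0)
    · exact fun t ht => (hd t ht).continuousAt.continuousWithinAt
    · intro t ht
      rw [interior_Ioi] at ht
      exact (hd t ht).differentiableAt.differentiableWithinAt
    · intro t ht
      rw [interior_Ioi] at ht
      rw [(hd t ht).deriv]
      linarith [hf t ht]
  have l0 := (lim0 w' r' s' hz').sub (lim0 w r s hz)
  have lI := (limI w' r' s' hr' hs').sub (limI w r s hr hs)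
  have lI' : Tendsto (fun t => G' t - G t) atTop (𝓝 (∑ i, w' i * r' i * Real.log (r' i) - ∑ i, w i * r i * Real.log (r i))) := by
    refine lI.congr fun t => ?_
    simp only [hG, hG', htr]; ring
  have key : ∀ t : ℝ, 0 < t → ∑ i, w' i * r' i * Real.log (s' i) - ∑ i, w i * r i * Real.log (s i)
      ≤ G' t - G t := by
    intro t ht
    refine le_of_tendsto l0 ?_
    filter_upwards [Ioo_mem_nhdsGT ht] with x hx
    exact mono hx.1 ht hx.2.le
  have fin := ge_of_tendsto lI' ((eventually_gt_atTop 0).mono key)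
  simp only [mul_sub, Finset.sum_sub_distrib]
  linarith

/-- quadratic functional -/
def qf {n : Type} [Fintype n] (ρ σ : Matrix n n ℂ) (t : ℝ) (X : Matrix n n ℂ) : ℝ :=
  2 * (Xᴴ * ρ).trace.re - (X * Xᴴ * σ).trace.re - t * (Xᴴ * X * ρ).trace.re

/-- a diagonalization -/
structure IsDg {n : Type} [Fintype n] [DecidableEq n] (ρ U : Matrix n n ℂ) (r : n → ℝ) : Prop where
  l : Uᴴ * U = 1
  rr : U * Uᴴ = 1
  eq : ρ = U * diagonal (fun i => (r i : ℂ)) * Uᴴ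
  nn : ∀ i, 0 ≤ r i

theorem qf_expand {n : Type} [Fintype n] [DecidableEq n] {ρ σ U V : Matrix n n ℂ} {r s : n → ℝ}
    (hU : IsDg ρ U r) (hV : IsDg σ V s) (t : ℝ) (x : Matrix n n ℂ) :
    qf ρ σ t (V * x * Uᴴ) = ∑ z : n × n, (2 * r z.2 * (star (x z.1 z.2) * (Vᴴ * U) z.1 z.2).re
      - (s z.1 + t * r z.2) * ‖x z.1 z.2‖ ^ 2) := by
  have e1 : ((V * x * Uᴴ)ᴴ * ρ).trace = (xᴴ * ((Vᴴ * U) * diagonal (fun i => (r i : ℂ)))).trace := by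
    rw [hU.eq]
    calc _ = (U * (xᴴ * (Vᴴ * U * diagonal (fun i => (r i : ℂ))) * Uᴴ)).trace := by
          simp [Matrix.mul_assoc]
      _ = _ := by rw [trace_mul_comm, Matrix.mul_assoc, hU.l, Matrix.mul_one]
  have e2 : ((V * x * Uᴴ) * (V * x * Uᴴ)ᴴ * σ).trace = (x * (xᴴ * diagonal (fun i => (s i : ℂ)))).trace := by
    rw [hV.eq]
    calc _ = (V * (x * (Uᴴ * U) * (xᴴ * (Vᴴ * V) * diagonal (fun i => (s i : ℂ))) * Vᴴ)).trace := by
          simp [Matrix.mul_assoc]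
      _ = _ := by rw [trace_mul_comm, Matrix.mul_assoc, hV.l, hU.l]; simp [Matrix.mul_assoc]
  have e3 : ((V * x * Uᴴ)ᴴ * (V * x * Uᴴ) * ρ).trace = (xᴴ * (x * diagonal (fun i => (r i : ℂ)))).trace := by
    rw [hU.eq]
    calc _ = (U * (xᴴ * (Vᴴ * V) * (x * (Uᴴ * U) * diagonal (fun i => (r i : ℂ))) * Uᴴ)).trace := by
          simp [Matrix.mul_assoc]
      _ = _ := by rw [trace_mul_comm, Matrix.mul_assoc, hV.l, hU.l]; simp [Matrix.mul_assoc]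
  have n1 : ∀ a : ℂ, ‖a‖ ^ 2 = a.re * a.re + a.im * a.im := fun a => by
    rw [← Complex.normSq_eq_norm_sq, Complex.normSq_apply]
  unfold qf
  rw [e1, e2, e3]
  generalize Vᴴ * U = u
  simp only [Matrix.trace, diag_apply, Matrix.mul_apply (M := xᴴ), Matrix.mul_apply (M := x), mul_diagonal,
    conjTranspose_apply, Complex.re_sum, Fintype.sum_prod_type, Matrix.diagonal_apply, mul_ite,
    mul_zero, Finset.sum_ite_eq', Finset.sum_ite_eq, Finset.mem_univ, if_true]
  rw [Finset.sum_comm, Finset.sum_comm (f := fun i j => (star (x j i) * (x j i * (r i : ℂ))).re)]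
  simp only [Finset.mul_sum, ← Finset.sum_sub_distrib]
  refine Finset.sum_congr rfl fun j _ => Finset.sum_congr rfl fun i _ => ?_
  rw [n1]
  simp only [Complex.mul_re, Complex.mul_im, Complex.ofReal_re, Complex.ofReal_im, RCLike.star_def,
    Complex.conj_re, Complex.conj_im]
  ring

theorem qf_le {n : Type} [Fintype n] [DecidableEq n] {ρ σ U V : Matrix n n ℂ} {r s : n → ℝ}
    (hU : IsDg ρ U r) (hV : IsDg σ V s) {t : ℝ} (ht : 0 < t) (X : Matrix n n ℂ) :
    qf ρ σ t X ≤ ∑ z : n × n, ‖(Vᴴ * U) z.1 z.2‖ ^ 2 * (r z.2 ^ 2 / (s z.1 + t * r z.2)) := by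
  have hX : X = V * (Vᴴ * X * U) * Uᴴ := by
    calc X = (V * Vᴴ) * X * (U * Uᴴ) := by rw [hV.rr, hU.rr]; simp
      _ = _ := by simp [Matrix.mul_assoc]
  rw [hX, qf_expand hU hV]
  refine Finset.sum_le_sum fun z _ => ?_
  generalize (Vᴴ * X * U) z.1 z.2 = x
  generalize (Vᴴ * U) z.1 z.2 = u
  have hr := hU.nn z.2
  have hs := hV.nn z.1
  have h1 : (star x * u).re ≤ ‖x‖ * ‖u‖ := by
    refine (Complex.re_le_norm _).trans ?_
    simp
  rcases hr.eq_or_lt with h | h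
  · simp [← h]; positivity
  · have hp : 0 < s z.1 + t * r z.2 := by positivity
    rw [← mul_div_assoc, le_div_iff₀ hp]
    have := mul_le_mul_of_nonneg_left h1 (by positivity : 0 ≤ 2 * r z.2 * (s z.1 + t * r z.2))
    nlinarith [sq_nonneg (‖x‖ * (s z.1 + t * r z.2) - ‖u‖ * r z.2)]

theorem qf_attain {n : Type} [Fintype n] [DecidableEq n] {ρ σ U V : Matrix n n ℂ} {r s : n → ℝ}
    (hU : IsDg ρ U r) (hV : IsDg σ V s) {t : ℝ} (ht : 0 < t) : ∃ X : Matrix n n ℂ,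
    qf ρ σ t X = ∑ z : n × n, ‖(Vᴴ * U) z.1 z.2‖ ^ 2 * (r z.2 ^ 2 / (s z.1 + t * r z.2)) := by
  refine ⟨V * (Matrix.of fun j i => ((r i / (s j + t * r i) : ℝ) : ℂ) * (Vᴴ * U) j i) * Uᴴ, ?_⟩
  rw [qf_expand hU hV]
  refine Finset.sum_congr rfl fun z _ => ?_
  simp only [of_apply]
  generalize (Vᴴ * U) z.1 z.2 = u
  have hr := hU.nn z.2
  have hs := hV.nn z.1
  have n1 : ∀ a : ℂ, ‖a‖ ^ 2 = a.re * a.re + a.im * a.im := fun a => by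
    rw [← Complex.normSq_eq_norm_sq, Complex.normSq_apply]
  rcases hr.eq_or_lt with h | h
  · simp [← h]
  · have hp : 0 < s z.1 + t * r z.2 := by positivity
    simp only [n1, Complex.mul_re, Complex.mul_im, Complex.ofReal_re, Complex.ofReal_im,
      RCLike.star_def, Complex.conj_re, Complex.conj_im]
    field_simp
    ring

theorem row_one {n : Type} [Fintype n] [DecidableEq n] {u : Matrix n n ℂ} (h : uᴴ * u = 1) (i : n) :
    ∑ j, ‖u j i‖ ^ 2 = 1 := by
  have := congrArg (fun M : Matrix n n ℂ => (M i i).re) h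
  simp only [Matrix.mul_apply, conjTranspose_apply, Complex.re_sum, one_apply_eq, Complex.one_re] at this
  rw [← this]
  refine Finset.sum_congr rfl fun j _ => ?_
  rw [← Complex.normSq_eq_norm_sq, Complex.normSq_apply]
  simp

theorem diag_conj {n : Type} [Fintype n] [DecidableEq n] {ρ U : Matrix n n ℂ} {r : n → ℝ}
    (hU : IsDg ρ U r) (V : Matrix n n ℂ) (j : n) :
    ((Vᴴ * ρ * V) j j).re = ∑ i, ‖(Vᴴ * U) j i‖ ^ 2 * r i := by
  have : Vᴴ * ρ * V = (Vᴴ * U) * diagonal (fun i => (r i : ℂ)) * (Vᴴ * U)ᴴ := by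
    rw [hU.eq]; simp [Matrix.mul_assoc]
  rw [this]
  generalize Vᴴ * U = u
  simp only [Matrix.mul_apply (N := uᴴ), mul_diagonal, conjTranspose_apply, Complex.re_sum]
  refine Finset.sum_congr rfl fun i _ => ?_
  rw [← Complex.normSq_eq_norm_sq, Complex.normSq_apply]
  simp
  ring

theorem IsDg.uu {n : Type} [Fintype n] [DecidableEq n] {ρ σ U V : Matrix n n ℂ} {r s : n → ℝ}
    (hU : IsDg ρ U r) (hV : IsDg σ V s) : (Vᴴ * U)ᴴ * (Vᴴ * U) = 1 := by
  calc (Vᴴ * U)ᴴ * (Vᴴ * U) = Uᴴ * (V * Vᴴ) * U := by simp [Matrix.mul_assoc]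
    _ = 1 := by rw [hV.rr]; simp [hU.l]

theorem IsDg.conj_self {n : Type} [Fintype n] [DecidableEq n] {ρ U : Matrix n n ℂ} {r : n → ℝ}
    (hU : IsDg ρ U r) : Uᴴ * ρ * U = diagonal (fun i => (r i : ℂ)) := by
  rw [hU.eq]
  calc _ = (Uᴴ * U) * diagonal (fun i => (r i : ℂ)) * (Uᴴ * U) := by simp only [Matrix.mul_assoc]
    _ = _ := by rw [hU.l]; simp

theorem IsDg.tr {n : Type} [Fintype n] [DecidableEq n] {ρ U : Matrix n n ℂ} {r : n → ℝ}
    (hU : IsDg ρ U r) : ρ.trace.re = ∑ i, r i := by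
  rw [hU.eq, Matrix.mul_assoc, trace_mul_comm, Matrix.mul_assoc, hU.l]
  simp [Matrix.trace]

/-- relative entropy in diagonal form -/
def relD {n : Type} [Fintype n] (u : Matrix n n ℂ) (r s : n → ℝ) : ℝ :=
  ∑ z : n × n, ‖u z.1 z.2‖ ^ 2 * r z.2 * (Real.log (r z.2) - Real.log (s z.1))

theorem supp_cond {n : Type} [Fintype n] [DecidableEq n] {ρ σ U V : Matrix n n ℂ} {r s : n → ℝ}
    (hU : IsDg ρ U r) (hV : IsDg σ V s) {c : ℝ} (hc : 0 < c) (hle : (σ - (c : ℂ) • ρ).PosSemidef)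
    (j i : n) (h : s j = 0) : ‖(Vᴴ * U) j i‖ ^ 2 * r i = 0 := by
  have h1 := (hle.conjTranspose_mul_mul_same V).diag_nonneg (i := j)
  have h2 : 0 ≤ ((Vᴴ * (σ - (c : ℂ) • ρ) * V) j j).re := (Complex.le_def.1 h1).1
  have h3 : Vᴴ * (σ - (c : ℂ) • ρ) * V = Vᴴ * σ * V - (c : ℂ) • (Vᴴ * ρ * V) := by
    simp [Matrix.mul_sub, Matrix.sub_mul]
  rw [h3, hV.conj_self] at h2
  simp only [Matrix.sub_apply, diagonal_apply_eq, h, Matrix.smul_apply, Complex.sub_re, smul_eq_mul,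
    Complex.re_ofReal_mul, diag_conj hU V j, Complex.ofReal_re] at h2
  have h4 : ∑ i, ‖(Vᴴ * U) j i‖ ^ 2 * r i = 0 := by
    have : 0 ≤ ∑ i, ‖(Vᴴ * U) j i‖ ^ 2 * r i :=
      Finset.sum_nonneg fun i _ => mul_nonneg (by positivity) (hU.nn i)
    nlinarith
  exact (Finset.sum_eq_zero_iff_of_nonneg fun i _ => mul_nonneg (by positivity) (hU.nn i)).1 h4 i
    (Finset.mem_univ _)

theorem relD_tr {n : Type} [Fintype n] [DecidableEq n] {u : Matrix n n ℂ} (h : uᴴ * u = 1)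
    (r : n → ℝ) : ∑ z : n × n, ‖u z.1 z.2‖ ^ 2 * r z.2 = ∑ i, r i := by
  rw [Fintype.sum_prod_type, Finset.sum_comm]
  simp only [← Finset.sum_mul, row_one h, one_mul]

theorem relD_mono {n m : Type} [Fintype n] [DecidableEq n] [Fintype m] [DecidableEq m]
    {ρ σ U V : Matrix n n ℂ} {r s : n → ℝ} (hU : IsDg ρ U r) (hV : IsDg σ V s)
    {ρ' σ' U' V' : Matrix m m ℂ} {r' s' : m → ℝ} (hU' : IsDg ρ' U' r') (hV' : IsDg σ' V' s')
    {c : ℝ} (hc : 0 < c) (hle : (σ - (c : ℂ) • ρ).PosSemidef)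
    (hle' : (σ' - (c : ℂ) • ρ').PosSemidef) (htr : ρ.trace = ρ'.trace)
    (Φ : Matrix n n ℂ → Matrix m m ℂ)
    (hΦ : ∀ t : ℝ, 0 < t → ∀ X, qf ρ σ t X ≤ qf ρ' σ' t (Φ X)) :
    relD (Vᴴ * U) r s ≤ relD (V'ᴴ * U') r' s' := by
  apply aux_calc (fun z : n × n => ‖(Vᴴ * U) z.1 z.2‖ ^ 2) (fun z => r z.2) (fun z => s z.1)
    (fun z : m × m => ‖(V'ᴴ * U') z.1 z.2‖ ^ 2) (fun z => r' z.2) (fun z => s' z.1)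
  · exact fun z => hU.nn _
  · exact fun z => hV.nn _
  · exact fun z => supp_cond hU hV hc hle z.1 z.2
  · exact fun z => hU'.nn _
  · exact fun z => hV'.nn _
  · exact fun z => supp_cond hU' hV' hc hle' z.1 z.2
  · rw [relD_tr (hU.uu hV), relD_tr (hU'.uu hV'), ← hU.tr, ← hU'.tr, htr]
  · intro t ht
    obtain ⟨X, hX⟩ := qf_attain hU hV ht
    rw [← hX]
    exact (hΦ t ht X).trans (qf_le hU' hV' ht _)

theorem relD_eq {n : Type} [Fintype n] [DecidableEq n]
    {ρ σ U V : Matrix n n ℂ} {r s : n → ℝ} (hU : IsDg ρ U r) (hV : IsDg σ V s) :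
    relD (Vᴴ * U) r s = ∑ i, r i * Real.log (r i) - ∑ j, ((Vᴴ * ρ * V) j j).re * Real.log (s j) := by
  unfold relD
  simp only [mul_sub, Finset.sum_sub_distrib]
  congr 1
  · simp only [mul_assoc]
    exact relD_tr (hU.uu hV) (fun i => r i * Real.log (r i))
  · rw [Fintype.sum_prod_type]
    simp only [diag_conj hU V, Finset.sum_mul]

theorem isDg_eig {n : Type} [Fintype n] [DecidableEq n] {ρ : Matrix n n ℂ} (h : ρ.PosSemidef) :
    IsDg ρ (h.1.eigenvectorUnitary : Matrix n n ℂ) h.1.eigenvalues where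
  l := Unitary.coe_star_mul_self _
  rr := Unitary.coe_mul_star_self _
  eq := by
    conv_lhs => rw [h.1.spectral_theorem, Unitary.conjStarAlgAut_apply]
    rfl
  nn := h.eigenvalues_nonneg

theorem vn_eq {n : Type} [Fintype n] [DecidableEq n] {ρ : Matrix n n ℂ} (h : ρ.PosSemidef) :
    vnEntropy ρ * Real.log 2 = -∑ i, h.1.eigenvalues i * Real.log (h.1.eigenvalues i) := by
  have : Real.log 2 ≠ 0 := (Real.log_pos one_lt_two).ne'
  unfold vnEntropy
  rw [dif_pos h.1, neg_mul, Finset.sum_mul]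
  congr 1
  refine Finset.sum_congr rfl fun i _ => ?_
  rw [Real.logb]; field_simp

/-- relative entropy -/
def relE {n : Type} [Fintype n] [DecidableEq n] {ρ σ : Matrix n n ℂ} (h : ρ.PosSemidef)
    (g : σ.PosSemidef) : ℝ :=
  relD ((g.1.eigenvectorUnitary : Matrix n n ℂ)ᴴ * (h.1.eigenvectorUnitary : Matrix n n ℂ))
    h.1.eigenvalues g.1.eigenvalues

theorem holevo {n K : Type} [Fintype n] [DecidableEq n] [Fintype K] (p : K → ℝ)
    (ρ : K → Matrix n n ℂ) (σ : Matrix n n ℂ) (hσ : σ = ∑ k, (p k : ℂ) • ρ k)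
    (h : ∀ k, (ρ k).PosSemidef) (g : σ.PosSemidef) :
    (vnEntropy σ - ∑ k, p k * vnEntropy (ρ k)) * Real.log 2 = ∑ k, p k * relE (h k) g := by
  have e : ∀ j, ∑ k, p k * (((g.1.eigenvectorUnitary : Matrix n n ℂ)ᴴ * ρ k *
      (g.1.eigenvectorUnitary : Matrix n n ℂ)) j j).re = g.1.eigenvalues j := by
    intro j
    have h1 := congrArg (fun M : Matrix n n ℂ => (M j j).re) (isDg_eig g).conj_self
    simp only [diagonal_apply_eq, Complex.ofReal_re] at h1
    rw [← h1]
    conv_rhs => rw [show ∀ V W : Matrix n n ℂ, V * σ * W = V * (∑ k, (p k : ℂ) • ρ k) * W from fun V W => by rw [← hσ]]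
    simp only [Matrix.mul_sum, Matrix.sum_mul, Matrix.sum_apply, Complex.re_sum, Matrix.mul_smul,
      Matrix.smul_mul, Matrix.smul_apply, smul_eq_mul, Complex.re_ofReal_mul]
  unfold relE
  simp only [relD_eq (isDg_eig (h _)) (isDg_eig g), mul_sub, sub_mul, Finset.sum_sub_distrib,
    Finset.sum_mul, mul_assoc, vn_eq (h _), vn_eq g, Finset.mul_sum, mul_neg, Finset.sum_neg_distrib]
  rw [Finset.sum_comm (f := fun k j => p k * (_ * Real.log (g.1.eigenvalues j)))]
  simp only [← mul_assoc, ← Finset.sum_mul, e]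
  ring

theorem relE_le {n : Type} [Fintype n] [DecidableEq n] {ρ σ : Matrix n n ℂ} (h : ρ.PosSemidef)
    (g : σ.PosSemidef) (ht : ρ.trace = 1) {c : ℝ} (hc : 0 < c)
    (hle : (σ - (c : ℂ) • ρ).PosSemidef) : relE h g ≤ - Real.log c := by
  have hd := isDg_eig h
  have hd' : IsDg ((c : ℂ) • ρ) (h.1.eigenvectorUnitary : Matrix n n ℂ)
      (fun i => c * h.1.eigenvalues i) :=
    ⟨hd.l, hd.rr, by
      conv_lhs => rw [hd.eq]
      rw [← Matrix.smul_mul, ← Matrix.mul_smul, ← diagonal_smul]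
      congr 3; ext i; simp, fun i => mul_nonneg hc.le (hd.nn i)⟩
  have := relD_mono hd (isDg_eig g) hd hd' hc hle (by simpa using PosSemidef.zero) rfl id (by
    intro t _ X
    unfold qf
    have h1 := (hle.conjTranspose_mul_mul_same X).trace_nonneg
    have h2 : 0 ≤ ((Xᴴ * (σ - (c : ℂ) • ρ) * X).trace).re := (Complex.le_def.1 h1).1
    rw [Matrix.trace_mul_comm, ← Matrix.mul_assoc, Matrix.mul_sub, Matrix.trace_sub,
      Complex.sub_re] at h2
    simp only [id]
    linarith)
  refine this.trans (le_of_eq ?_)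
  rw [hd.l]
  have htr : ∑ i, h.1.eigenvalues i = 1 := by rw [← hd.tr, ht]; simp
  unfold relD
  rw [Fintype.sum_prod_type]
  have : ∀ j, ∑ i, ‖(1 : Matrix n n ℂ) j i‖ ^ 2 * h.1.eigenvalues i *
      (Real.log (h.1.eigenvalues i) - Real.log (c * h.1.eigenvalues j))
      = h.1.eigenvalues j * (- Real.log c) := by
    intro j
    rw [Finset.sum_eq_single j]
    · rcases (hd.nn j).eq_or_lt with h0 | h0
      · simp [← h0]
      · rw [Real.log_mul hc.ne' h0.ne']; simp
    · intro i _ hi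
      simp [Matrix.one_apply_ne hi.symm]
    · simp
  simp only [this, ← Finset.sum_mul, htr, one_mul]

theorem ptraceB_psd {A B : Type} [Fintype A] [Fintype B] {ρ : Matrix (A × B) (A × B) ℂ}
    (h : ρ.PosSemidef) : (ptraceB ρ).PosSemidef := by
  have : ptraceB ρ = ∑ b : B, ρ.submatrix (fun a => (a, b)) (fun a => (a, b)) := by
    ext a a'; simp [ptraceB, Matrix.sum_apply]
  rw [this]
  exact posSemidef_sum _ fun b _ => h.submatrix _

theorem ptraceA_psd {A B : Type} [Fintype A] [Fintype B] {ρ : Matrix (A × B) (A × B) ℂ}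
    (h : ρ.PosSemidef) : (ptraceA ρ).PosSemidef := by
  have : ptraceA ρ = ∑ a : A, ρ.submatrix (fun b => (a, b)) (fun b => (a, b)) := by
    ext a a'; simp [ptraceA, Matrix.sum_apply]
  rw [this]
  exact posSemidef_sum _ fun b _ => h.submatrix _

theorem ptraceB_tr {A B : Type} [Fintype A] [Fintype B] [DecidableEq B]
    (ρ : Matrix (A × B) (A × B) ℂ) (Y : Matrix A A ℂ) :
    ((Y ⊗ₖ (1 : Matrix B B ℂ)) * ρ).trace = (Y * ptraceB ρ).trace := by
  simp only [Matrix.trace, diag_apply, Matrix.mul_apply, Fintype.sum_prod_type, ptraceB, of_apply,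
    kroneckerMap_apply, Matrix.one_apply, Finset.mul_sum, mul_ite, mul_one, mul_zero, ite_mul,
    zero_mul, Finset.sum_ite_eq, Finset.mem_univ, if_true]
  exact Finset.sum_congr rfl fun a _ => Finset.sum_comm

theorem relE_ptrace {A B : Type} [Fintype A] [Fintype B] [DecidableEq A] [DecidableEq B]
    {ρ σ : Matrix (A × B) (A × B) ℂ} (h : ρ.PosSemidef) (g : σ.PosSemidef) {c : ℝ} (hc : 0 < c)
    (hle : (σ - (c : ℂ) • ρ).PosSemidef) (hle' : (ptraceB σ - (c : ℂ) • ptraceB ρ).PosSemidef) :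
    relE (ptraceB_psd h) (ptraceB_psd g) ≤ relE h g := by
  refine relD_mono (isDg_eig (ptraceB_psd h)) (isDg_eig (ptraceB_psd g)) (isDg_eig h) (isDg_eig g)
    hc hle' hle ?_ (fun X => X ⊗ₖ (1 : Matrix B B ℂ)) ?_
  · have := ptraceB_tr ρ (1 : Matrix A A ℂ)
    simpa using this.symm
  · intro t _ X
    apply le_of_eq
    unfold qf
    simp only [conjTranspose_kronecker, conjTranspose_one, ← mul_kronecker_mul, Matrix.mul_one,
      ptraceB_tr]

/-- I(∑_k p_k ρ^k) ≤ ∑_k p_k I(ρ^k) + S({p_k}). -/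
theorem stmt_4 {A B K : Type} [Fintype A] [Fintype B] [Fintype K]
    [DecidableEq A] [DecidableEq B]
    (p : K → ℝ) (hp : ∀ k, 0 ≤ p k) (hp1 : ∑ k, p k = 1)
    (ρ : K → Matrix (A × B) (A × B) ℂ) (hρ : ∀ k, IsDensity (ρ k)) :
    mutInfo (∑ k, (p k : ℂ) • ρ k) ≤ ∑ k, p k * mutInfo (ρ k) + shannon p := by
  classical
  have pos : ∀ k, ((p k : ℂ) • ρ k).PosSemidef := fun k =>
    (hρ k).1.smul (by exact_mod_cast hp k)
  have hle : ∀ k, (∑ l, (p l : ℂ) • ρ l - (p k : ℂ) • ρ k).PosSemidef := fun k => by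
    rw [← Finset.sum_erase_eq_sub (Finset.mem_univ k)]
    exact posSemidef_sum _ fun l _ => pos l
  have g : (∑ l, (p l : ℂ) • ρ l).PosSemidef := posSemidef_sum _ fun l _ => pos l
  have hB : ptraceB (∑ k, (p k : ℂ) • ρ k) = ∑ k, (p k : ℂ) • ptraceB (ρ k) := by
    ext a a'
    simp only [ptraceB, of_apply, Matrix.sum_apply, Matrix.smul_apply, Finset.smul_sum]
    exact Finset.sum_comm
  have hA : ptraceA (∑ k, (p k : ℂ) • ρ k) = ∑ k, (p k : ℂ) • ptraceA (ρ k) := by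
    ext a a'
    simp only [ptraceA, of_apply, Matrix.sum_apply, Matrix.smul_apply, Finset.smul_sum]
    exact Finset.sum_comm
  have sA : ∀ (σ : Matrix (A × B) (A × B) ℂ) k, ptraceA (σ - (p k : ℂ) • ρ k)
      = ptraceA σ - (p k : ℂ) • ptraceA (ρ k) := fun σ k => by
    ext a a'; simp [ptraceA, Finset.mul_sum]
  have sB : ∀ (σ : Matrix (A × B) (A × B) ℂ) k, ptraceB (σ - (p k : ℂ) • ρ k)
      = ptraceB σ - (p k : ℂ) • ptraceB (ρ k) := fun σ k => by
    ext a a'; simp [ptraceB, Finset.mul_sum]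
  have tA : ∀ k, (ptraceA (ρ k)).trace = 1 := fun k => by
    rw [← (hρ k).2]
    simp only [Matrix.trace, diag_apply, ptraceA, of_apply, Fintype.sum_prod_type]
    exact Finset.sum_comm
  have H := holevo p ρ _ rfl (fun k => (hρ k).1) g
  have HB := holevo p _ _ hB (fun k => ptraceB_psd (hρ k).1) (ptraceB_psd g)
  have HA := holevo p _ _ hA (fun k => ptraceA_psd (hρ k).1) (ptraceA_psd g)
  have i1 : ∑ k, p k * relE (ptraceB_psd (hρ k).1) (ptraceB_psd g) ≤ ∑ k, p k * relE (hρ k).1 g := by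
    refine Finset.sum_le_sum fun k _ => ?_
    rcases (hp k).eq_or_lt with h | h
    · simp [← h]
    · exact mul_le_mul_of_nonneg_left
        (relE_ptrace _ _ h (hle k) (by rw [← sB]; exact ptraceB_psd (hle k))) h.le
  have i2 : ∑ k, p k * relE (ptraceA_psd (hρ k).1) (ptraceA_psd g) ≤ ∑ k, p k * (- Real.log (p k)) := by
    refine Finset.sum_le_sum fun k _ => ?_
    rcases (hp k).eq_or_lt with h | h
    · simp [← h]
    · exact mul_le_mul_of_nonneg_left
        (relE_le _ _ (tA k) h (by rw [← sA]; exact ptraceA_psd (hle k))) h.le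
  have l2 : 0 < Real.log 2 := Real.log_pos one_lt_two
  have hs : shannon p * Real.log 2 = ∑ k, p k * (- Real.log (p k)) := by
    unfold shannon
    rw [neg_mul, Finset.sum_mul, ← Finset.sum_neg_distrib]
    refine Finset.sum_congr rfl fun k _ => ?_
    rw [Real.logb]; field_simp
  refine le_of_mul_le_mul_right ?_ l2
  unfold mutInfo
  simp only [mul_sub, mul_add, Finset.sum_sub_distrib, Finset.sum_add_distrib]
  rw [← HB, ← H] at i1
  rw [← HA, ← hs] at i2
  linarith

end
end

section
/- For any mixed ensemble {(p_k, ρ^k_A ⊗ ρ^k_B)} of product states and any n ≥ 1, the mutual information across the A^n : B^n cut of the de Finetti state ∑_k p_k (ρ^k_A ⊗ ρ^k_B)^{⊗n} is at most the Shannon entropy S({p_k}); hence it is bounded uniformly in n. -/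
open scoped BigOperators Kronecker ComplexOrder
open Matrix Filter Topology

noncomputable section

lemma scal_int (x T : ℝ) (hx : 0 < x) (hT : 0 < T) :
    IntervalIntegrable (fun t => 1 / (x + t)) MeasureTheory.volume 0 T ∧
    ∫ t in (0:ℝ)..T, 1 / (x + t) = Real.log (x + T) - Real.log x := by
  have hc : ContinuousOn (fun t => 1 / (x + t)) (Set.uIcc 0 T) := by
    intro t ht
    rw [Set.uIcc_of_le hT.le] at ht
    have : x + t ≠ 0 := by linarith [ht.1]
    exact ContinuousAt.continuousWithinAt (by fun_prop (disch := assumption))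
  refine ⟨hc.intervalIntegrable, ?_⟩
  have := intervalIntegral.integral_eq_sub_of_hasDerivAt (f := fun t => Real.log (x + t))
    (f' := fun t => 1 / (x + t)) (a := 0) (b := T) ?_ hc.intervalIntegrable
  · simpa using this
  · intro t ht
    rw [Set.uIcc_of_le hT.le] at ht
    exact HasDerivAt.log ((hasDerivAt_id t).const_add x) (by simp; linarith [ht.1])

/-- scalar lemma: from the resolvent inequalities to the log inequality -/
lemma scal_main {ι K : Type*} [Fintype ι] [Fintype K] (c x : ι → ℝ) (p : K → ℝ)
    (hc : ∀ i, 0 ≤ c i) (hx : ∀ i, 0 ≤ x i) (hp : ∀ k, 0 ≤ p k)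
    (hc1 : ∑ i, c i = 1) (hp1 : ∑ k, p k = 1)
    (h : ∀ t > 0, ∑ i, c i / (x i + t) ≤ ∑ k, p k / (p k + t)) :
    (∀ i, c i ≠ 0 → 0 < x i) ∧
    -∑ i, c i * Real.log (x i) ≤ -∑ k, p k * Real.log (p k) := by
  have hpos : ∀ i, c i ≠ 0 → 0 < x i := by
    intro i hi
    by_contra hxi
    have hxi : x i = 0 := le_antisymm (not_lt.mp hxi) (hx i)
    have hci : 0 < c i := lt_of_le_of_ne (hc i) (Ne.symm hi)
    set N : ℝ := (Fintype.card K : ℝ) with hN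
    have hN0 : 0 ≤ N := by positivity
    have ht : 0 < c i / (N + 1) := by positivity
    have h1 := h _ ht
    have h2 : c i / (x i + c i / (N + 1)) ≤ ∑ i', c i' / (x i' + c i / (N + 1)) :=
      Finset.single_le_sum (f := fun i' => c i' / (x i' + c i / (N + 1)))
        (fun j _ => div_nonneg (hc j) (add_nonneg (hx j) ht.le)) (Finset.mem_univ i)
    have h3 : ∑ k, p k / (p k + c i / (N + 1)) ≤ ∑ k : K, (1 : ℝ) := by
      refine Finset.sum_le_sum fun k _ => ?_
      rw [div_le_one (by linarith [hp k])]
      linarith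
    have h4 : c i / (x i + c i / (N + 1)) = N + 1 := by
      rw [hxi, zero_add]; field_simp
    simp at h3
    linarith
  refine ⟨hpos, ?_⟩
  have key : ∀ T > 0, -∑ i, c i * Real.log (x i) ≤ -∑ k, p k * Real.log (p k) + 1 / T := by
    intro T hT
    have I1 : ∀ i, IntervalIntegrable (fun t => c i / (x i + t)) MeasureTheory.volume 0 T ∧
        ∫ t in (0:ℝ)..T, c i / (x i + t) = c i * (Real.log (x i + T) - Real.log (x i)) := by
      intro i
      by_cases hi : c i = 0
      · simp [hi]
      · have := scal_int (x i) T (hpos i hi) hT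
        have e : (fun t => c i / (x i + t)) = fun t => c i * (1 / (x i + t)) := by
          ext t; ring
        rw [e]
        refine ⟨this.1.const_mul _, ?_⟩
        rw [intervalIntegral.integral_const_mul, this.2]
    have I2 : ∀ i, IntervalIntegrable (fun t => p i / (p i + t)) MeasureTheory.volume 0 T ∧
        ∫ t in (0:ℝ)..T, p i / (p i + t) = p i * (Real.log (p i + T) - Real.log (p i)) := by
      intro i
      by_cases hi : p i = 0
      · simp [hi]
      · have := scal_int (p i) T (lt_of_le_of_ne (hp i) (Ne.symm hi)) hT
        have e : (fun t => p i / (p i + t)) = fun t => p i * (1 / (p i + t)) := by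
          ext t; ring
        rw [e]
        refine ⟨this.1.const_mul _, ?_⟩
        rw [intervalIntegral.integral_const_mul, this.2]
    have hint : ∫ t in (0:ℝ)..T, ∑ i, c i / (x i + t) ≤ ∫ t in (0:ℝ)..T, ∑ k, p k / (p k + t) := by
      refine intervalIntegral.integral_mono_on_of_le_Ioo hT.le ?_ ?_ ?_
      · have := IntervalIntegrable.sum Finset.univ (fun i _ => (I1 i).1)
        simpa [Finset.sum_fn] using this
      · have := IntervalIntegrable.sum Finset.univ (fun i _ => (I2 i).1)
        simpa [Finset.sum_fn] using this
      · intro t ht; exact h t ht.1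
    rw [intervalIntegral.integral_finsetSum (fun i _ => (I1 i).1),
      intervalIntegral.integral_finsetSum (fun i _ => (I2 i).1),
      Finset.sum_congr rfl (fun i _ => (I1 i).2), Finset.sum_congr rfl (fun i _ => (I2 i).2)] at hint
    simp only [mul_sub, Finset.sum_sub_distrib] at hint
    have L : Real.log T ≤ ∑ i, c i * Real.log (x i + T) := by
      calc Real.log T = ∑ i, c i * Real.log T := by rw [← Finset.sum_mul, hc1, one_mul]
        _ ≤ _ := Finset.sum_le_sum fun i _ => mul_le_mul_of_nonneg_left
          (Real.log_le_log hT (by linarith [hx i])) (hc i)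
    have R : ∑ k, p k * Real.log (p k + T) ≤ Real.log T + 1 / T := by
      calc ∑ k, p k * Real.log (p k + T) ≤ ∑ k, p k * (Real.log T + 1 / T) := by
            refine Finset.sum_le_sum fun k _ => mul_le_mul_of_nonneg_left ?_ (hp k)
            have hk : p k ≤ 1 := hp1 ▸ Finset.single_le_sum (fun j _ => hp j) (Finset.mem_univ k)
            have e : p k + T = T * (p k / T + 1) := by field_simp
            have hq : 0 ≤ p k / T := div_nonneg (hp k) hT.le
            rw [e, Real.log_mul hT.ne' (by linarith)]
            have := Real.log_le_sub_one_of_pos (x := p k / T + 1) (by linarith)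
            have : p k / T ≤ 1 / T := by gcongr
            linarith
        _ = _ := by rw [← Finset.sum_mul, hp1, one_mul]
    linarith
  refine le_of_forall_pos_le_add fun ε hε => ?_
  have := key (1 / ε) (by positivity)
  simpa using this

/-- tensor power of a matrix -/
def mpow {A : Type} (n : ℕ) (M : Matrix A A ℂ) : Matrix (Fin n → A) (Fin n → A) ℂ :=
  Matrix.of fun x y => ∏ i, M (x i) (y i)

lemma mpow_mul {A : Type} [Fintype A] (n : ℕ) (M N : Matrix A A ℂ) :
    mpow n (M * N) = mpow n M * mpow n N := by
  classical
  ext x y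
  simp only [mpow, Matrix.mul_apply, Matrix.of_apply, ← Finset.prod_mul_distrib]
  rw [← Fintype.prod_sum (fun i a => M (x i) a * N a (y i))]

lemma mpow_star {A : Type} (n : ℕ) (M : Matrix A A ℂ) :
    mpow n (Mᴴ) = (mpow n M)ᴴ := by
  ext x y
  simp [mpow, Matrix.conjTranspose_apply]

open scoped MatrixOrder in
lemma psd_factor {N : Type} [Fintype N] [DecidableEq N] {M : Matrix N N ℂ}
    (h : M.PosSemidef) : ∃ C : Matrix N N ℂ, M = Cᴴ * C :=
  CStarAlgebra.nonneg_iff_eq_star_mul_self.mp h.nonneg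

lemma mpow_density {A : Type} [Fintype A] [DecidableEq A] (n : ℕ) (M : Matrix A A ℂ)
    (h : IsDensity M) : IsDensity (mpow n M) := by
  constructor
  · obtain ⟨C, rfl⟩ := psd_factor h.1
    rw [mpow_mul, mpow_star]
    exact Matrix.posSemidef_conjTranspose_mul_self _
  · have := h.2
    simp only [Matrix.trace, mpow, Matrix.diag_apply, Matrix.of_apply] at this ⊢
    rw [← Fintype.prod_sum (fun _ a => M a a)]
    simp [this]

lemma tpow_kron {A B : Type} (n : ℕ) (M : Matrix A A ℂ) (N : Matrix B B ℂ) :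
    tpow (M ⊗ₖ N) n = mpow n M ⊗ₖ mpow n N := by
  ext x y
  simp [tpow, mpow, Finset.prod_mul_distrib]

/-- completing the square -/
lemma one_term {N : Type} [Fintype N] [DecidableEq N] (R X : Matrix N N ℂ) (hR : R.PosSemidef)
    (a t : ℝ) (ha : 0 ≤ a) (ht : 0 < t) :
    2 * (R * X).trace.re - a * (Xᴴ * R * X).trace.re - t * (X * R * Xᴴ).trace.re
      ≤ R.trace.re / (a + t) := by
  have hat : 0 < a + t := by linarith
  set l : ℝ := 1 / (a + t) with hl
  have h1 : 0 ≤ ((X - (l:ℂ) • 1)ᴴ * R * (X - (l:ℂ) • 1)).trace.re :=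
    (Complex.le_def.mp (hR.conjTranspose_mul_mul_same _).trace_nonneg).1
  have h2 : 0 ≤ ((X - (l:ℂ) • 1) * R * (X - (l:ℂ) • 1)ᴴ).trace.re :=
    (Complex.le_def.mp (hR.mul_mul_conjTranspose_same _).trace_nonneg).1
  have hc : (Xᴴ * R).trace.re = (R * X).trace.re := by
    have : (Xᴴ * R) = (R * X)ᴴ := by rw [Matrix.conjTranspose_mul, hR.1]
    rw [this, Matrix.trace_conjTranspose]; simp
  have e1 : ((X - (l:ℂ) • 1)ᴴ * R * (X - (l:ℂ) • 1)).trace.re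
      = (Xᴴ * R * X).trace.re - 2 * l * (R * X).trace.re + l ^ 2 * R.trace.re := by
    simp [Matrix.sub_mul, Matrix.mul_sub, hc]
    ring
  have e2 : ((X - (l:ℂ) • 1) * R * (X - (l:ℂ) • 1)ᴴ).trace.re
      = (X * R * Xᴴ).trace.re - 2 * l * (R * X).trace.re + l ^ 2 * R.trace.re := by
    have := Matrix.trace_mul_comm X R
    have h3 := Matrix.trace_mul_comm R Xᴴ
    simp [Matrix.sub_mul, Matrix.mul_sub, hc, this, h3]
    ring
  rw [e1] at h1
  rw [e2] at h2
  have h3 := mul_nonneg ha h1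
  have h4 := mul_nonneg ht.le h2
  have hl1 : l * (a + t) = 1 := by rw [hl]; field_simp
  have : R.trace.re / (a + t) = l * R.trace.re := by rw [hl]; ring
  rw [this]
  have h5 : a * (l * (R * X).trace.re) + t * (l * (R * X).trace.re) = (R * X).trace.re := by
    linear_combination (R * X).trace.re * hl1
  have h6 : a * (l ^ 2 * R.trace.re) + t * (l ^ 2 * R.trace.re) = l * R.trace.re := by
    linear_combination (l * R.trace.re) * hl1
  nlinarith

lemma core {N K : Type} [Fintype N] [DecidableEq N] [Fintype K] (R : K → Matrix N N ℂ)
    (hR : ∀ k, (R k).PosSemidef) (p : K → ℝ) (hp : ∀ k, 0 ≤ p k)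
    (hRp : ∀ k, (R k).trace.re = p k) (ρ τ : Matrix N N ℂ) (hρ : ρ = ∑ k, R k)
    (hτ : (τ - ∑ k, (p k : ℂ) • R k).PosSemidef)
    (U V : Matrix N N ℂ) (hU : Uᴴ * U = 1) (hV : Vᴴ * V = 1) (r s : N → ℝ)
    (hr : ∀ i, 0 ≤ r i) (hs : ∀ i, 0 ≤ s i)
    (hρU : ρ = U * diagonal (fun i => (r i : ℂ)) * Uᴴ)
    (hτV : τ = V * diagonal (fun i => (s i : ℂ)) * Vᴴ) (t : ℝ) (ht : 0 < t) :
    ∑ i, ∑ j, Complex.normSq ((Vᴴ * U) i j) * (r j ^ 2 / (s i + t * r j))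
      ≤ ∑ k, p k / (p k + t) := by
  set W := Vᴴ * U with hW
  let Y : Matrix N N ℂ := Matrix.of fun i j => W i j * ((r j / (s i + t * r j) : ℝ) : ℂ)
  let X := V * Y * Uᴴ
  have hX : X = V * Y * Uᴴ := rfl
  have eX : Xᴴ = U * Yᴴ * Vᴴ := by simp [hX, Matrix.mul_assoc]
  have f1 : (ρ * X).trace = ((diagonal (fun i => (r i : ℂ))) * Wᴴ * Y).trace := by
    have : ρ * X = U * (diagonal (fun i => (r i : ℂ)) * (Uᴴ * V) * Y) * Uᴴ := by
      rw [hρU, hX]; simp only [Matrix.mul_assoc]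
    rw [this, Matrix.trace_mul_comm, ← Matrix.mul_assoc, hU, Matrix.one_mul, hW]
    simp
  have f2 : (Xᴴ * τ * X).trace = (Yᴴ * (diagonal (fun i => (s i : ℂ))) * Y).trace := by
    have : Xᴴ * τ * X = U * (Yᴴ * (Vᴴ * V) * diagonal (fun i => (s i : ℂ)) * (Vᴴ * V) * Y) * Uᴴ := by
      rw [hτV, eX, hX]; simp only [Matrix.mul_assoc]
    rw [this, Matrix.trace_mul_comm, ← Matrix.mul_assoc, hU, hV]
    simp
  have f3 : (X * ρ * Xᴴ).trace = (Y * (diagonal (fun i => (r i : ℂ))) * Yᴴ).trace := by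
    have : X * ρ * Xᴴ = V * (Y * (Uᴴ * U) * diagonal (fun i => (r i : ℂ)) * (Uᴴ * U) * Yᴴ) * Vᴴ := by
      rw [hρU, eX, hX]; simp only [Matrix.mul_assoc]
    rw [this, Matrix.trace_mul_comm, ← Matrix.mul_assoc, hU, hV]
    simp
  have g1 : (ρ * X).trace.re =
      ∑ i, ∑ j, Complex.normSq (W i j) * (r j ^ 2 / (s i + t * r j)) := by
    rw [f1, Finset.sum_comm]
    simp only [Matrix.trace, Matrix.diag_apply, Matrix.mul_apply (N := Y), Matrix.diagonal_mul, Complex.re_sum]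
    refine Finset.sum_congr rfl fun j _ => Finset.sum_congr rfl fun i _ => ?_
    have : (r j : ℂ) * Wᴴ j i * Y i j
        = ((r j ^ 2 / (s i + t * r j) : ℝ) : ℂ) * (W i j * star (W i j)) := by
      simp [Y, Matrix.conjTranspose_apply]; ring
    rw [this]
    simp only [RCLike.star_def, Complex.mul_conj, ← Complex.ofReal_mul, Complex.ofReal_re]
    ring
  have nY : ∀ i j, Complex.normSq (Y i j) = Complex.normSq (W i j) * (r j / (s i + t * r j)) ^ 2 := by
    intro i j
    simp only [Y, Matrix.of_apply, Complex.normSq_mul, Complex.normSq_ofReal]; ring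
  have g2 : (Xᴴ * τ * X).trace.re =
      ∑ i, ∑ j, Complex.normSq (W i j) * (s i * (r j / (s i + t * r j)) ^ 2) := by
    rw [f2, Finset.sum_comm]
    simp only [Matrix.trace, Matrix.diag_apply, Matrix.mul_apply (N := Y), Matrix.mul_diagonal, Complex.re_sum]
    refine Finset.sum_congr rfl fun j _ => Finset.sum_congr rfl fun i _ => ?_
    have : Yᴴ j i * (s i : ℂ) * Y i j = (s i : ℂ) * (Y i j * star (Y i j)) := by
      simp [Matrix.conjTranspose_apply]; ring
    rw [this]
    simp only [RCLike.star_def, Complex.mul_conj, ← Complex.ofReal_mul, Complex.ofReal_re, nY]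
    ring
  have g3 : (X * ρ * Xᴴ).trace.re =
      ∑ i, ∑ j, Complex.normSq (W i j) * (r j * (r j / (s i + t * r j)) ^ 2) := by
    rw [f3]
    simp only [Matrix.trace, Matrix.diag_apply, Matrix.mul_apply (N := Yᴴ), Matrix.mul_diagonal, Complex.re_sum]
    refine Finset.sum_congr rfl fun i _ => Finset.sum_congr rfl fun j _ => ?_
    have : Y i j * (r j : ℂ) * Yᴴ j i = (r j : ℂ) * (Y i j * star (Y i j)) := by
      simp [Matrix.conjTranspose_apply]; ring
    rw [this]
    simp only [RCLike.star_def, Complex.mul_conj, ← Complex.ofReal_mul, Complex.ofReal_re, nY]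
    ring
  have hG : ∑ i, ∑ j, Complex.normSq (W i j) * (r j ^ 2 / (s i + t * r j))
      = 2 * (ρ * X).trace.re - (Xᴴ * τ * X).trace.re - t * (X * ρ * Xᴴ).trace.re := by
    rw [g1, g2, g3]
    simp only [Finset.mul_sum, ← Finset.sum_sub_distrib]
    refine Finset.sum_congr rfl fun i _ => Finset.sum_congr rfl fun j _ => ?_
    by_cases h0 : s i + t * r j = 0
    · simp [h0]
    · obtain ⟨D, hD⟩ : ∃ D, D = s i + t * r j := ⟨_, rfl⟩
      rw [← hD] at h0 ⊢
      have hsi : s i = D - t * r j := by linarith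
      rw [hsi]
      field_simp
      ring
  have hτ2 : ∑ k, p k * (Xᴴ * R k * X).trace.re ≤ (Xᴴ * τ * X).trace.re := by
    have := (Complex.le_def.mp (hτ.conjTranspose_mul_mul_same X).trace_nonneg).1
    simp only [Matrix.mul_sub, Matrix.sub_mul, Matrix.mul_sum, Matrix.sum_mul, Matrix.trace_sub,
      Matrix.trace_sum, Matrix.mul_smul, Matrix.smul_mul, Matrix.trace_smul, Complex.sub_re,
      Complex.re_sum, smul_eq_mul, Complex.re_ofReal_mul, Complex.zero_re] at this
    linarith
  have hρ1 : (ρ * X).trace.re = ∑ k, (R k * X).trace.re := by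
    rw [hρ]; simp only [Matrix.sum_mul, Matrix.trace_sum, Complex.re_sum]
  have hρ2 : (X * ρ * Xᴴ).trace.re = ∑ k, (X * R k * Xᴴ).trace.re := by
    rw [hρ]; simp only [Matrix.sum_mul, Matrix.mul_sum, Matrix.trace_sum, Complex.re_sum]
  rw [hG]
  have hk := Finset.sum_le_sum (s := Finset.univ) fun k _ => one_term (R k) X (hR k) (p k) t (hp k) ht
  simp only [hRp, Finset.sum_sub_distrib, ← Finset.mul_sum] at hk
  rw [hρ1, hρ2]
  linarith

lemma herm_decomp {N : Type} [Fintype N] [DecidableEq N] {M : Matrix N N ℂ} (h : M.IsHermitian) :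
    ∃ U : Matrix N N ℂ, Uᴴ * U = 1 ∧ U * Uᴴ = 1 ∧
      M = U * diagonal (fun i => (h.eigenvalues i : ℂ)) * Uᴴ := by
  refine ⟨h.eigenvectorUnitary, ?_, ?_, ?_⟩
  · exact Unitary.coe_star_mul_self h.eigenvectorUnitary
  · exact Unitary.coe_mul_star_self h.eigenvectorUnitary
  · conv_lhs => rw [h.spectral_theorem, Unitary.conjStarAlgAut_apply]
    rfl

lemma diag_recover {N : Type} [Fintype N] [DecidableEq N] {M U D : Matrix N N ℂ}
    (hU : Uᴴ * U = 1) (h : M = U * D * Uᴴ) : Uᴴ * M * U = D := by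
  have : Uᴴ * M * U = (Uᴴ * U) * D * (Uᴴ * U) := by rw [h]; simp only [Matrix.mul_assoc]
  rw [this, hU]; simp

theorem gen_bound {A B K : Type} [Fintype A] [Fintype B] [Fintype K]
    [DecidableEq A] [DecidableEq B]
    (p : K → ℝ) (hp : ∀ k, 0 ≤ p k) (hp1 : ∑ k, p k = 1)
    (α : K → Matrix A A ℂ) (β : K → Matrix B B ℂ)
    (hA : ∀ k, IsDensity (α k)) (hB : ∀ k, IsDensity (β k)) :
    mutInfo (∑ k, (p k : ℂ) • (α k ⊗ₖ β k)) ≤ shannon p := by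
  have hpc : ∀ k, (0 : ℂ) ≤ (p k : ℂ) := fun k => by exact_mod_cast hp k
  set ρ := ∑ k, (p k : ℂ) • (α k ⊗ₖ β k) with hρ
  set ρA := ∑ k, (p k : ℂ) • α k with hρA
  set ρB := ∑ k, (p k : ℂ) • β k with hρB
  have eA : ptraceB ρ = ρA := by
    ext a a'
    simp only [ptraceB, hρ, hρA, Matrix.of_apply, Matrix.sum_apply, Matrix.smul_apply,
      Matrix.kroneckerMap_apply, smul_eq_mul]
    rw [Finset.sum_comm]
    refine Finset.sum_congr rfl fun k _ => ?_
    have := (hB k).2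
    simp only [Matrix.trace, Matrix.diag_apply] at this
    rw [← Finset.mul_sum, ← Finset.mul_sum, this, mul_one]
  have eB : ptraceA ρ = ρB := by
    ext a a'
    simp only [ptraceA, hρ, hρB, Matrix.of_apply, Matrix.sum_apply, Matrix.smul_apply,
      Matrix.kroneckerMap_apply, smul_eq_mul]
    rw [Finset.sum_comm]
    refine Finset.sum_congr rfl fun k _ => ?_
    have := (hA k).2
    simp only [Matrix.trace, Matrix.diag_apply] at this
    rw [← Finset.mul_sum, ← Finset.sum_mul, this, one_mul]
  have pA : ρA.PosSemidef := Matrix.posSemidef_sum _ fun k _ => (hA k).1.smul (hpc k)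
  have pB : ρB.PosSemidef := Matrix.posSemidef_sum _ fun k _ => (hB k).1.smul (hpc k)
  have pR : ∀ k, ((p k : ℂ) • (α k ⊗ₖ β k)).PosSemidef := fun k =>
    ((hA k).1.kronecker (hB k).1).smul (hpc k)
  have pAB : ρ.PosSemidef := Matrix.posSemidef_sum _ fun k _ => pR k
  obtain ⟨VA, hVA, hVA', dA⟩ := herm_decomp pA.1
  obtain ⟨VB, hVB, hVB', dB⟩ := herm_decomp pB.1
  obtain ⟨U, hU, hU', dU⟩ := herm_decomp pAB.1
  have a0 := pA.eigenvalues_nonneg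
  have b0 := pB.eigenvalues_nonneg
  have r0 := pAB.eigenvalues_nonneg
  unfold mutInfo
  rw [eA, eB]
  unfold vnEntropy
  rw [dif_pos pA.1, dif_pos pB.1, dif_pos pAB.1]
  set a := pA.1.eigenvalues with ha
  set b := pB.1.eigenvalues with hb
  set r := pAB.1.eigenvalues with hr
  set V := VA ⊗ₖ VB with hVdef
  have hV : Vᴴ * V = 1 := by
    rw [hVdef, Matrix.conjTranspose_kronecker, ← Matrix.mul_kronecker_mul, hVA, hVB,
      Matrix.one_kronecker_one]
  have hV' : V * Vᴴ = 1 := by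
    rw [hVdef, Matrix.conjTranspose_kronecker, ← Matrix.mul_kronecker_mul, hVA', hVB',
      Matrix.one_kronecker_one]
  let s : A × B → ℝ := fun i => a i.1 * b i.2
  have hs0 : ∀ i, 0 ≤ s i := fun i => mul_nonneg (a0 _) (b0 _)
  have hτV : ρA ⊗ₖ ρB = V * diagonal (fun i => (s i : ℂ)) * Vᴴ := by
    have : diagonal (fun i => (s i : ℂ)) =
        diagonal (fun i => (a i : ℂ)) ⊗ₖ diagonal (fun i => (b i : ℂ)) := by
      rw [Matrix.diagonal_kronecker_diagonal]; simp [s]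
    rw [this, hVdef, Matrix.conjTranspose_kronecker, ← Matrix.mul_kronecker_mul,
      ← Matrix.mul_kronecker_mul, ← dA, ← dB]
  have htr : ∀ k, ((p k : ℂ) • (α k ⊗ₖ β k)).trace.re = p k := by
    intro k
    rw [Matrix.trace_smul, Matrix.trace_kronecker, (hA k).2, (hB k).2]
    simp
  have hτ : (ρA ⊗ₖ ρB - ∑ k, (p k : ℂ) • ((p k : ℂ) • (α k ⊗ₖ β k))).PosSemidef := by
    classical
    have e : ρA ⊗ₖ ρB - ∑ k, (p k : ℂ) • ((p k : ℂ) • (α k ⊗ₖ β k)) =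
        ∑ k, ∑ l ∈ Finset.univ.erase k, ((p k : ℂ) * (p l : ℂ)) • (α k ⊗ₖ β l) := by
      rw [sub_eq_iff_eq_add, ← Finset.sum_add_distrib]
      have e2 : ρA ⊗ₖ ρB = ∑ k, ∑ l, ((p k : ℂ) * (p l : ℂ)) • (α k ⊗ₖ β l) := by
        ext x y
        simp only [hρA, hρB, Matrix.kroneckerMap_apply, Matrix.sum_apply, Matrix.smul_apply,
          smul_eq_mul, Finset.sum_mul_sum]
        refine Finset.sum_congr rfl fun k _ => Finset.sum_congr rfl fun l _ => ?_
        ring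
      rw [e2]
      refine Finset.sum_congr rfl fun k _ => ?_
      rw [smul_smul, Finset.sum_erase_add _ _ (Finset.mem_univ k)]
    rw [e]
    exact Matrix.posSemidef_sum _ fun k _ => Matrix.posSemidef_sum _ fun l _ =>
      ((hA k).1.kronecker (hB l).1).smul (mul_nonneg (hpc k) (hpc l))
  have hcore := core (fun k => (p k : ℂ) • (α k ⊗ₖ β k)) pR p hp htr ρ (ρA ⊗ₖ ρB) hρ hτ U V hU hV
    r s r0 hs0 dU hτV
  set W := Vᴴ * U with hW
  let w : A × B → A × B → ℝ := fun i j => Complex.normSq (W i j)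
  have hw0 : ∀ i j, 0 ≤ w i j := fun i j => Complex.normSq_nonneg _
  -- column sums of w
  have hcol : ∀ j, ∑ i, w i j = 1 := by
    intro j
    have h1 : Wᴴ * W = 1 := by
      have : Wᴴ * W = Uᴴ * (V * Vᴴ) * U := by rw [hW]; simp [Matrix.mul_assoc]
      rw [this, hV']; simpa using hU
    have h2 := congrFun (congrFun h1 j) j
    rw [Matrix.mul_apply, Matrix.one_apply_eq] at h2
    have h3 : ∀ i, Wᴴ j i * W i j = ((w i j : ℝ) : ℂ) := by
      intro i
      rw [Matrix.conjTranspose_apply, RCLike.star_def, ← Complex.normSq_eq_conj_mul_self]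
    simp only [h3] at h2
    exact_mod_cast h2
  have hr1 : ∑ j, r j = 1 := by
    have h1 : ρ.trace = 1 := by
      rw [hρ, Matrix.trace_sum]
      simp only [Matrix.trace_smul, Matrix.trace_kronecker, (hA _).2, (hB _).2, smul_eq_mul, mul_one]
      exact_mod_cast hp1
    rw [pAB.1.trace_eq_sum_eigenvalues] at h1
    have h2 := congrArg Complex.re h1
    simpa using h2
  let q : A × B → ℝ := fun i => ∑ j, w i j * r j
  -- q is the diagonal of the state in the product basis
  have hq : ∀ i, (q i : ℂ) = (Vᴴ * ρ * V) i i := by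
    intro i
    have h1 : Vᴴ * ρ * V = W * diagonal (fun i => (r i : ℂ)) * Wᴴ := by
      rw [dU, hW]; simp [Matrix.mul_assoc]
    rw [h1, Matrix.mul_apply]
    simp only [q, Matrix.mul_diagonal, Matrix.conjTranspose_apply, RCLike.star_def]
    push_cast
    refine Finset.sum_congr rfl fun j _ => ?_
    have : ((w i j : ℝ) : ℂ) = W i j * (starRingEnd ℂ) (W i j) := (Complex.mul_conj _).symm
    rw [this]; ring
  have hq2 : ∀ i j, (q (i, j) : ℂ) =
      ∑ k, (p k : ℂ) * ((VAᴴ * α k * VA) i i * (VBᴴ * β k * VB) j j) := by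
    intro i j
    have h1 : Vᴴ * ρ * V = ∑ k, (p k : ℂ) • ((VAᴴ * α k * VA) ⊗ₖ (VBᴴ * β k * VB)) := by
      rw [hρ, hVdef, Matrix.conjTranspose_kronecker, Matrix.mul_sum, Matrix.sum_mul]
      refine Finset.sum_congr rfl fun k _ => ?_
      rw [Matrix.mul_smul, Matrix.smul_mul, ← Matrix.mul_kronecker_mul, ← Matrix.mul_kronecker_mul]
    rw [hq, h1]
    simp [Matrix.sum_apply]
  have trA : ∀ k, ∑ i, (VAᴴ * α k * VA) i i = 1 := by
    intro k
    have : (VAᴴ * α k * VA).trace = 1 := by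
      rw [Matrix.trace_mul_comm, ← Matrix.mul_assoc, hVA', Matrix.one_mul, (hA k).2]
    exact this
  have trB : ∀ k, ∑ i, (VBᴴ * β k * VB) i i = 1 := by
    intro k
    have : (VBᴴ * β k * VB).trace = 1 := by
      rw [Matrix.trace_mul_comm, ← Matrix.mul_assoc, hVB', Matrix.one_mul, (hB k).2]
    exact this
  have mA : ∀ i, ∑ j, q (i, j) = a i := by
    intro i
    have h1 := congrFun (congrFun (diag_recover hVA dA) i) i
    rw [Matrix.diagonal_apply_eq, hρA, Matrix.mul_sum, Matrix.sum_mul, Matrix.sum_apply] at h1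
    have h2 : ((∑ j, q (i, j) : ℝ) : ℂ) = (a i : ℂ) := by
      rw [← h1]
      push_cast
      simp only [hq2]
      rw [Finset.sum_comm]
      refine Finset.sum_congr rfl fun k _ => ?_
      rw [← Finset.mul_sum, ← Finset.mul_sum, trB, mul_one]
      simp
    exact_mod_cast h2
  have mB : ∀ j, ∑ i, q (i, j) = b j := by
    intro j
    have h1 := congrFun (congrFun (diag_recover hVB dB) j) j
    rw [Matrix.diagonal_apply_eq, hρB, Matrix.mul_sum, Matrix.sum_mul, Matrix.sum_apply] at h1
    have h2 : ((∑ i, q (i, j) : ℝ) : ℂ) = (b j : ℂ) := by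
      rw [← h1]
      push_cast
      simp only [hq2]
      rw [Finset.sum_comm]
      refine Finset.sum_congr rfl fun k _ => ?_
      rw [← Finset.mul_sum, ← Finset.sum_mul, trA, one_mul]
      simp
    exact_mod_cast h2
  obtain ⟨hpos, hmain⟩ := scal_main (ι := (A × B) × (A × B)) (fun x => w x.1 x.2 * r x.2)
    (fun x => s x.1 / r x.2) p (fun x => mul_nonneg (hw0 _ _) (r0 _))
    (fun x => div_nonneg (hs0 _) (r0 _)) hp
    (by
      rw [Fintype.sum_prod_type, Finset.sum_comm]
      simp only [← Finset.sum_mul, hcol, one_mul]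
      exact hr1) hp1
    (by
      intro t ht
      refine le_trans (le_of_eq ?_) (hcore t ht)
      rw [Fintype.sum_prod_type]
      refine Finset.sum_congr rfl fun i _ => Finset.sum_congr rfl fun j _ => ?_
      by_cases h0 : r j = 0
      · simp [h0]
      · have : s i / r j + t = (s i + t * r j) / r j := by field_simp
        simp only [this, w]
        rw [div_div_eq_mul_div]
        ring)
  have hsplit : ∀ x : (A × B) × (A × B), w x.1 x.2 * r x.2 * Real.log (s x.1 / r x.2) =
      w x.1 x.2 * r x.2 * Real.log (a x.1.1) + w x.1 x.2 * r x.2 * Real.log (b x.1.2)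
        - w x.1 x.2 * (r x.2 * Real.log (r x.2)) := by
    intro x
    by_cases h0 : w x.1 x.2 * r x.2 = 0
    · rw [← mul_assoc, h0]; simp
    · have h1 := hpos x h0
      have h2 : r x.2 ≠ 0 := right_ne_zero_of_mul h0
      have h3 : s x.1 ≠ 0 := fun h => by simp [h] at h1
      rw [Real.log_div h3 h2, Real.log_mul (left_ne_zero_of_mul h3) (right_ne_zero_of_mul h3)]
      ring
  simp only [hsplit, Finset.sum_sub_distrib, Finset.sum_add_distrib] at hmain
  have s1 : ∑ x : (A × B) × (A × B), w x.1 x.2 * r x.2 * Real.log (a x.1.1)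
      = ∑ i, a i * Real.log (a i) := by
    rw [Fintype.sum_prod_type]
    simp only [← Finset.sum_mul]
    change ∑ x : A × B, q x * Real.log (a x.1) = _
    rw [Fintype.sum_prod_type]
    simp only [← Finset.sum_mul, mA]
  have s2 : ∑ x : (A × B) × (A × B), w x.1 x.2 * r x.2 * Real.log (b x.1.2)
      = ∑ i, b i * Real.log (b i) := by
    rw [Fintype.sum_prod_type]
    simp only [← Finset.sum_mul]
    change ∑ x : A × B, q x * Real.log (b x.2) = _
    rw [Fintype.sum_prod_type, Finset.sum_comm]
    simp only [← Finset.sum_mul, mB]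
  have s3 : ∑ x : (A × B) × (A × B), w x.1 x.2 * (r x.2 * Real.log (r x.2))
      = ∑ i, r i * Real.log (r i) := by
    rw [Fintype.sum_prod_type, Finset.sum_comm]
    simp only [← Finset.sum_mul, hcol, one_mul]
  rw [s1, s2, s3] at hmain
  unfold shannon
  simp only [Real.logb, ← mul_div_assoc, ← Finset.sum_div]
  have l2 : 0 < Real.log 2 := Real.log_pos (by norm_num)
  rw [← neg_div, ← neg_div, ← neg_div, ← neg_div, ← add_div, ← sub_div]
  gcongr
  linarith

/-- the mutual information across the A^n : B^n cut of a de Finetti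
state built from product states is at most the Shannon entropy of the weights,
uniformly in n. -/
theorem stmt_5 {A B K : Type} [Fintype A] [Fintype B] [Fintype K]
    [DecidableEq A] [DecidableEq B]
    (p : K → ℝ) (hp : ∀ k, 0 ≤ p k) (hp1 : ∑ k, p k = 1)
    (ρA : K → Matrix A A ℂ) (ρB : K → Matrix B B ℂ)
    (hA : ∀ k, IsDensity (ρA k)) (hB : ∀ k, IsDensity (ρB k))
    (n : ℕ) (hn : 1 ≤ n) :
    mutInfo (∑ k, (p k : ℂ) • tpow (ρA k ⊗ₖ ρB k) n) ≤ shannon p := by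
  simp only [tpow_kron]
  exact gen_bound p hp hp1 _ _ (fun k => mpow_density n _ (hA k)) (fun k => mpow_density n _ (hB k))

end
end

section
/- For a classical-classical state ρ_{AB} = ∑_{ij} p_{ij} |i⟩⟨i|_A ⊗ |j⟩⟨j|_B, and any n ≥ 1, the n-copy broadcast mutual information satisfies (I_b)_n(ρ_{AB}) = I(ρ_{AB}); i.e., there exists an n-copy broadcast state whose mutual information across the A^n : B^n cut equals I(ρ_{AB}), and no broadcast copy achieves less. -/
open scoped BigOperators Kronecker ComplexOrder
open Matrix Filter Topology

noncomputable section

lemma core_real {N X : Type} [Fintype N] [Fintype X] (μ r : N → ℝ) (p R : X → ℝ)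
    (hr : ∀ n, 0 < r n) (hR : ∀ x, 0 < R x) (hs : ∑ n, μ n = ∑ x, p x)
    (h : ∀ s : ℝ, 0 < s → ∑ x, p x / (R x + s) ≤ ∑ n, μ n / (r n + s)) :
    ∑ n, μ n * Real.log (r n) ≤ ∑ x, p x * Real.log (R x) := by
  set G : ℝ → ℝ := fun s => ∑ n, μ n * Real.log (r n + s) - ∑ x, p x * Real.log (R x + s) with hG
  have hder : ∀ s : ℝ, 0 ≤ s →
      HasDerivAt G (∑ n, μ n / (r n + s) - ∑ x, p x / (R x + s)) s := by
    intro s hs0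
    have aux : ∀ c w : ℝ, 0 < c → HasDerivAt (fun s => w * Real.log (c + s)) (w / (c + s)) s := by
      intro c w hc
      have h1 : HasDerivAt (fun s : ℝ => c + s) 1 s := (hasDerivAt_id s).const_add c
      have := (h1.log (by positivity)).const_mul w
      have e : w / (c + s) = w * (1 / (c + s)) := by ring
      rw [e]
      exact this
    exact (HasDerivAt.fun_sum fun n _ => aux (r n) (μ n) (hr n)).sub
      (HasDerivAt.fun_sum fun x _ => aux (R x) (p x) (hR x))
  have hmono : MonotoneOn G (Set.Ici 0) := by
    apply monotoneOn_of_deriv_nonneg (convex_Ici 0)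
    · exact fun s hs => (hder s hs).continuousAt.continuousWithinAt
    · intro s hs
      rw [interior_Ici] at hs
      exact (hder s (le_of_lt hs)).differentiableAt.differentiableWithinAt
    · intro s hs
      rw [interior_Ici] at hs
      rw [(hder s (le_of_lt hs)).deriv]
      linarith [h s hs]
  have hlim : Tendsto G atTop (𝓝 0) := by
    have aux : ∀ c : ℝ, Tendsto (fun s => Real.log (c + s) - Real.log s) atTop (𝓝 0) := by
      intro c
      have h1 : Tendsto (fun s : ℝ => Real.log (1 + c / s)) atTop (𝓝 0) := by
        have h2 : Tendsto (fun s : ℝ => 1 + c / s) atTop (𝓝 1) := by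
          simpa using (tendsto_const_nhds (x := (1:ℝ))).add (tendsto_const_nhds.div_atTop tendsto_id : Tendsto (fun s : ℝ => c / s) atTop (𝓝 0))
        simpa using h2.log one_ne_zero
      refine h1.congr' ?_
      filter_upwards [eventually_gt_atTop 0, eventually_gt_atTop (-c)] with s hs hs2
      rw [← Real.log_div (by linarith) hs.ne']
      congr 1
      field_simp
      ring
    have h3 : Tendsto (fun s => ∑ n, μ n * (Real.log (r n + s) - Real.log s)
        - ∑ x, p x * (Real.log (R x + s) - Real.log s)) atTop (𝓝 0) := by
      have := (tendsto_finsetSum Finset.univ fun n _ => (aux (r n)).const_mul (μ n)).sub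
        (tendsto_finsetSum Finset.univ fun x _ => (aux (R x)).const_mul (p x))
      simpa using this
    refine h3.congr fun s => ?_
    simp only [hG, mul_sub, Finset.sum_sub_distrib, ← Finset.sum_mul, hs]
    ring
  have h0 : G 0 ≤ 0 := by
    refine ge_of_tendsto hlim ?_
    filter_upwards [eventually_ge_atTop 0] with s hs
    exact hmono (Set.mem_Ici.2 le_rfl) hs hs
  simp only [hG, add_zero] at h0
  linarith

lemma core_real2 {N X : Type} [Fintype N] [Fintype X] (m t d : N → ℝ) (p q : X → ℝ)
    (ht : ∀ n, 0 ≤ t n) (hd : ∀ n, 0 ≤ d n)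
    (hp : ∀ x, 0 ≤ p x) (hq : ∀ x, 0 ≤ q x)
    (hd0 : ∀ n, d n = 0 → t n * m n = 0) (hq0 : ∀ x, q x = 0 → p x = 0)
    (hs : ∑ n, t n * m n = ∑ x, p x)
    (h : ∀ s : ℝ, 0 < s → ∑ x, p x ^ 2 / (q x + s * p x) ≤ ∑ n, t n ^ 2 * m n / (d n + s * t n)) :
    ∑ n, t n * m n * Real.log (d n) - ∑ x, p x * Real.log (q x) ≤
      ∑ n, t n * m n * Real.log (t n) - ∑ x, p x * Real.log (p x) := by
  classical
  have key := core_real (fun n => t n * m n) (fun n => if t n * m n = 0 then 1 else d n / t n)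
    p (fun x => if p x = 0 then 1 else q x / p x) ?_ ?_ hs ?_
  · have e1 : ∀ n, t n * m n * Real.log (if t n * m n = 0 then 1 else d n / t n)
        = t n * m n * Real.log (d n) - t n * m n * Real.log (t n) := by
      intro n
      split_ifs with h0
      · rw [h0]; ring
      · rw [Real.log_div (fun h => h0 (hd0 n h)) (fun h => h0 (by rw [h, zero_mul]))]; ring
    have e2 : ∀ x, p x * Real.log (if p x = 0 then 1 else q x / p x)
        = p x * Real.log (q x) - p x * Real.log (p x) := by
      intro x
      split_ifs with h0
      · rw [h0]; ring
      · rw [Real.log_div (fun h => h0 (hq0 x h)) h0]; ring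
    simp only [e1, e2, Finset.sum_sub_distrib] at key
    linarith
  · intro n
    split_ifs with h0
    · exact one_pos
    · exact div_pos ((hd n).lt_of_ne' fun h => h0 (hd0 n h))
        ((ht n).lt_of_ne' fun h => h0 (by rw [h, zero_mul]))
  · intro x
    split_ifs with h0
    · exact one_pos
    · exact div_pos ((hq x).lt_of_ne' fun h => h0 (hq0 x h)) ((hp x).lt_of_ne' h0)
  · intro s hs
    refine le_of_eq_of_le ?_ ((h s hs).trans_eq ?_)
    · refine Finset.sum_congr rfl fun x _ => ?_
      split_ifs with h0
      · simp [h0]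
      · have : 0 < p x := (hp x).lt_of_ne' h0
        have := hq x
        field_simp
    · refine Finset.sum_congr rfl fun n _ => ?_
      split_ifs with h0
      · rw [h0, sq, mul_assoc, h0]; simp
      · have : 0 < t n := (ht n).lt_of_ne' fun h => h0 (by rw [h, zero_mul])
        have := hd n
        field_simp

lemma vnEntropy_isom {m n : Type} [Fintype m] [Fintype n] [DecidableEq m] [DecidableEq n]
    (K : Matrix m n ℂ) (hK : Kᴴ * K = 1) (p : n → ℝ) :
    vnEntropy (K * Matrix.diagonal (fun x => (p x : ℂ)) * Kᴴ) = shannon p := by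
  have hD : (Matrix.diagonal (fun x => (p x : ℂ))).IsHermitian := by
    rw [Matrix.IsHermitian, Matrix.diagonal_conjTranspose]
    congr 1; ext x; simp
  have hH : (K * Matrix.diagonal (fun x => (p x : ℂ)) * Kᴴ).IsHermitian :=
    isHermitian_mul_mul_conjTranspose K hD
  unfold vnEntropy shannon
  rw [dif_pos hH]
  congr 1
  have h1 := Matrix.charpoly_mul_comm' K (Matrix.diagonal (fun x => (p x : ℂ)) * Kᴴ)
  rw [← Matrix.mul_assoc, Matrix.mul_assoc (Matrix.diagonal _), hK, Matrix.mul_one] at h1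
  have h2 := congrArg Polynomial.roots h1
  have hne : ∀ (k : ℕ) (q : Polynomial ℂ), q.Monic → (Polynomial.X ^ k * q) ≠ 0 :=
    fun k q hq => ((Polynomial.monic_X_pow k).mul hq).ne_zero
  have h4 : (∏ i, (Polynomial.X - Polynomial.C (p i : ℂ))).roots
      = Finset.univ.val.map (fun i => (p i : ℂ)) := by
    rw [Polynomial.roots_prod _ _ (Finset.prod_ne_zero_iff.2 fun i _ =>
      Polynomial.X_sub_C_ne_zero _)]
    simp
  rw [Polynomial.roots_mul (hne _ _ (Matrix.charpoly_monic _)),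
    Polynomial.roots_mul (hne _ _ (Matrix.charpoly_monic _)),
    hH.roots_charpoly_eq_eigenvalues, Matrix.charpoly_diagonal, h4] at h2
  have h3 := congrArg (fun s => (s.map fun z : ℂ => z.re * Real.logb 2 z.re).sum) h2
  simpa [Polynomial.roots_X_pow, Multiset.map_nsmul, Multiset.sum_nsmul] using h3

lemma exists_diag {n : Type} [Fintype n] [DecidableEq n] (α : Matrix n n ℂ)
    (h : α.IsHermitian) : ∃ (U : Matrix n n ℂ) (a : n → ℝ), Uᴴ * U = 1 ∧ U * Uᴴ = 1 ∧
      α = U * Matrix.diagonal (fun x => (a x : ℂ)) * Uᴴ ∧ a = h.eigenvalues := by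
  refine ⟨h.eigenvectorUnitary, h.eigenvalues, ?_, ?_, ?_, rfl⟩
  · exact Matrix.mem_unitaryGroup_iff'.1 h.eigenvectorUnitary.2
  · exact Matrix.mem_unitaryGroup_iff.1 h.eigenvectorUnitary.2
  · exact h.spectral_theorem

structure IsPVM {A ι : Type} [Fintype A] [Fintype ι] [DecidableEq A] [DecidableEq ι]
    (E : ι → Matrix A A ℂ) : Prop where
  herm : ∀ i, (E i)ᴴ = E i
  mul : ∀ i j, E i * E j = if i = j then E i else 0
  sum : ∑ i, E i = 1

lemma IsPVM.kron {A B ι κ : Type} [Fintype A] [Fintype B] [Fintype ι] [Fintype κ]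
    [DecidableEq A] [DecidableEq B] [DecidableEq ι] [DecidableEq κ]
    {E : ι → Matrix A A ℂ} {F : κ → Matrix B B ℂ} (hE : IsPVM E) (hF : IsPVM F) :
    IsPVM (fun x : ι × κ => E x.1 ⊗ₖ F x.2) where
  herm x := by rw [Matrix.conjTranspose_kronecker, hE.herm, hF.herm]
  mul x y := by
    rw [← Matrix.mul_kronecker_mul, hE.mul, hF.mul]
    by_cases h1 : x.1 = y.1 <;> by_cases h2 : x.2 = y.2 <;> simp [h1, h2, Prod.ext_iff]
  sum := by
    rw [Fintype.sum_prod_type, ← Matrix.one_kronecker_one, ← hE.sum, ← hF.sum]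
    ext i j
    simp [Matrix.sum_apply, Matrix.kroneckerMap_apply, Finset.sum_mul_sum]

lemma ptraceB_herm {A B : Type} [Fintype A] [Fintype B] {τ : Matrix (A × B) (A × B) ℂ}
    (h : τ.IsHermitian) : (ptraceB τ).IsHermitian := by
  ext i j
  simp [ptraceB, Matrix.conjTranspose_apply, h.apply]

lemma ptraceA_herm {A B : Type} [Fintype A] [Fintype B] {τ : Matrix (A × B) (A × B) ℂ}
    (h : τ.IsHermitian) : (ptraceA τ).IsHermitian := by
  ext i j
  simp [ptraceA, Matrix.conjTranspose_apply, h.apply]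

lemma trace_mul_ptraceB {A B : Type} [Fintype A] [Fintype B] [DecidableEq B]
    (X : Matrix A A ℂ) (τ : Matrix (A × B) (A × B) ℂ) :
    ((X ⊗ₖ (1 : Matrix B B ℂ)) * τ).trace = (X * ptraceB τ).trace := by
  simp only [Matrix.trace, Matrix.diag_apply, Matrix.mul_apply, Fintype.sum_prod_type,
    Matrix.kroneckerMap_apply, ptraceB, Matrix.of_apply, Matrix.one_apply, mul_ite, mul_one,
    mul_zero, ite_mul, zero_mul, Finset.sum_ite_eq, Finset.mem_univ, if_true, Finset.mul_sum]
  exact Finset.sum_congr rfl fun i _ => Finset.sum_comm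

lemma trace_mul_ptraceA {A B : Type} [Fintype A] [Fintype B] [DecidableEq A]
    (X : Matrix B B ℂ) (τ : Matrix (A × B) (A × B) ℂ) :
    (((1 : Matrix A A ℂ) ⊗ₖ X) * τ).trace = (X * ptraceA τ).trace := by
  simp only [Matrix.trace, Matrix.diag_apply, Matrix.mul_apply, Fintype.sum_prod_type_right,
    Matrix.kroneckerMap_apply, ptraceA, Matrix.of_apply, Matrix.one_apply, ite_mul, one_mul,
    zero_mul, Finset.sum_ite_eq, Finset.mem_univ, if_true, Finset.mul_sum]
  exact Finset.sum_congr rfl fun i _ => Finset.sum_comm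

lemma trace_left {N K : Type} [Fintype N] [Fintype K] [DecidableEq N]
    (M : Matrix N K ℂ) (d : N → ℝ) :
    (Mᴴ * Matrix.diagonal (fun x => (d x : ℂ)) * M).trace
      = ((∑ x : N × K, d x.1 * Complex.normSq (M x.1 x.2) : ℝ) : ℂ) := by
  simp only [Matrix.trace, Matrix.diag_apply, Matrix.mul_apply (N := M), Matrix.mul_diagonal,
    Matrix.conjTranspose_apply, Fintype.sum_prod_type_right]
  push_cast
  refine Finset.sum_congr rfl fun k _ => Finset.sum_congr rfl fun i _ => ?_
  rw [← Complex.mul_conj]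
  simp; ring

lemma trace_right {N K : Type} [Fintype N] [Fintype K] [DecidableEq K]
    (M C : Matrix N K ℂ) (t : K → ℝ) :
    (M * Matrix.diagonal (fun x => (t x : ℂ)) * Cᴴ).trace
      = ∑ x : N × K, (t x.2 : ℂ) * (M x.1 x.2 * star (C x.1 x.2)) := by
  simp only [Matrix.trace, Matrix.diag_apply, Matrix.mul_apply (N := Cᴴ), Matrix.mul_diagonal,
    Matrix.conjTranspose_apply, Fintype.sum_prod_type]
  refine Finset.sum_congr rfl fun k _ => Finset.sum_congr rfl fun i _ => ?_
  ring

lemma pointwise_ineq (z w : ℂ) (t e : ℝ) (he : 0 ≤ e) (h0 : e = 0 → t = 0) :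
    2 * (t * (w * star z).re) - e * Complex.normSq w ≤ t ^ 2 * Complex.normSq z / e := by
  rcases eq_or_lt_of_le he with h | h
  · rw [h0 h.symm, ← h]; simp
  · rw [le_div_iff₀ h]
    have hw : (w * star z).re = w.re * z.re + w.im * z.im := by simp
    rw [hw, Complex.normSq_apply, Complex.normSq_apply]
    nlinarith [sq_nonneg (t * z.re - e * w.re), sq_nonneg (t * z.im - e * w.im)]

lemma ptraceB_conj {A B A' B' : Type} [Fintype A] [Fintype B] [Fintype A'] [Fintype B']
    [DecidableEq B] [DecidableEq B']
    (K : Matrix A' A ℂ) (L : Matrix B' B ℂ) (hL : Lᴴ * L = 1) (τ : Matrix (A × B) (A × B) ℂ) :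
    ptraceB ((K ⊗ₖ L) * τ * (K ⊗ₖ L)ᴴ) = K * ptraceB τ * Kᴴ := by
  rw [Matrix.ext_iff_trace_mul_left]
  intro X
  have h1 : ((K ⊗ₖ L)ᴴ * (X ⊗ₖ (1 : Matrix B' B' ℂ))) * (K ⊗ₖ L)
      = (Kᴴ * X * K) ⊗ₖ (1 : Matrix B B ℂ) := by
    rw [Matrix.conjTranspose_kronecker, ← Matrix.mul_kronecker_mul, ← Matrix.mul_kronecker_mul,
      Matrix.mul_one, hL]
  rw [← trace_mul_ptraceB, ← Matrix.mul_assoc, Matrix.trace_mul_comm, ← Matrix.mul_assoc,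
    ← Matrix.mul_assoc, h1, trace_mul_ptraceB, ← Matrix.mul_assoc, Matrix.trace_mul_comm _ Kᴴ]
  simp only [Matrix.mul_assoc]

lemma ptraceA_conj {A B A' B' : Type} [Fintype A] [Fintype B] [Fintype A'] [Fintype B']
    [DecidableEq A] [DecidableEq A']
    (K : Matrix A' A ℂ) (L : Matrix B' B ℂ) (hK : Kᴴ * K = 1) (τ : Matrix (A × B) (A × B) ℂ) :
    ptraceA ((K ⊗ₖ L) * τ * (K ⊗ₖ L)ᴴ) = L * ptraceA τ * Lᴴ := by
  rw [Matrix.ext_iff_trace_mul_left]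
  intro X
  have h1 : ((K ⊗ₖ L)ᴴ * ((1 : Matrix A' A' ℂ) ⊗ₖ X)) * (K ⊗ₖ L)
      = (1 : Matrix A A ℂ) ⊗ₖ (Lᴴ * X * L) := by
    rw [Matrix.conjTranspose_kronecker, ← Matrix.mul_kronecker_mul, ← Matrix.mul_kronecker_mul,
      Matrix.mul_one, hK]
  rw [← trace_mul_ptraceA, ← Matrix.mul_assoc, Matrix.trace_mul_comm, ← Matrix.mul_assoc,
    ← Matrix.mul_assoc, h1, trace_mul_ptraceA, ← Matrix.mul_assoc, Matrix.trace_mul_comm _ Lᴴ]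
  simp only [Matrix.mul_assoc]

lemma meas_mono {A B ι κ : Type} [Fintype A] [Fintype B] [Fintype ι] [Fintype κ]
    [DecidableEq A] [DecidableEq B] [DecidableEq ι] [DecidableEq κ]
    {E : ι → Matrix A A ℂ} {F : κ → Matrix B B ℂ} (hE : IsPVM E) (hF : IsPVM F)
    (τ : Matrix (A × B) (A × B) ℂ) (hτ : IsDensity τ)
    (p : ι × κ → ℝ) (hp : IsProbDist p)
    (hpt : ∀ x, ((E x.1 ⊗ₖ F x.2) * τ).trace = (p x : ℂ)) :
    classMI p ≤ mutInfo τ := by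
  obtain ⟨hp0, hp1⟩ := hp
  have hH := hτ.1.isHermitian
  obtain ⟨W, t, hW1, hW2, hτd, ht'⟩ := exists_diag τ hH
  have ht : ∀ k, 0 ≤ t k := by
    intro k; rw [ht']; exact hτ.1.eigenvalues_nonneg k
  obtain ⟨UA, a, hUA1, hUA2, had, ha'⟩ := exists_diag _ (ptraceB_herm hH)
  obtain ⟨UB, b, hUB1, hUB2, hbd, hb'⟩ := exists_diag _ (ptraceA_herm hH)
  set U := UA ⊗ₖ UB with hU
  have hU1 : Uᴴ * U = 1 := by
    rw [hU, Matrix.conjTranspose_kronecker, ← Matrix.mul_kronecker_mul, hUA1, hUB1,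
      Matrix.one_kronecker_one]
  have hU2 : U * Uᴴ = 1 := by
    rw [hU, Matrix.conjTranspose_kronecker, ← Matrix.mul_kronecker_mul, hUA2, hUB2,
      Matrix.one_kronecker_one]
  set d : A × B → ℝ := fun x => a x.1 * b x.2 with hd
  have hσ : ptraceB τ ⊗ₖ ptraceA τ = U * Matrix.diagonal (fun x => (d x : ℂ)) * Uᴴ := by
    rw [had, hbd, hU, Matrix.conjTranspose_kronecker, Matrix.mul_kronecker_mul,
      Matrix.mul_kronecker_mul, Matrix.diagonal_kronecker_diagonal]
    simp [hd]
  set C : Matrix (A × B) (A × B) ℂ := Uᴴ * W with hC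
  -- marginal traces
  have hqA : ∀ i, (E i * ptraceB τ).trace = (margA p i : ℂ) := by
    intro i
    rw [← trace_mul_ptraceB, ← hF.sum]
    have : E i ⊗ₖ (∑ j, F j) = ∑ j, E i ⊗ₖ F j := by
      ext x y; simp [Matrix.sum_apply, Matrix.kroneckerMap_apply, Finset.mul_sum]
    rw [this, Finset.sum_mul, Matrix.trace_sum]
    simp only [margA, Complex.ofReal_sum]
    exact Finset.sum_congr rfl fun j _ => hpt (i, j)
  have hqB : ∀ j, (F j * ptraceA τ).trace = (margB p j : ℂ) := by
    intro j
    rw [← trace_mul_ptraceA, ← hE.sum]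
    have : (∑ i, E i) ⊗ₖ F j = ∑ i, E i ⊗ₖ F j := by
      ext x y; simp [Matrix.sum_apply, Matrix.kroneckerMap_apply, Finset.sum_mul]
    rw [this, Finset.sum_mul, Matrix.trace_sum]
    simp only [margB, Complex.ofReal_sum]
    exact Finset.sum_congr rfl fun i _ => hpt (i, j)
  set q : ι × κ → ℝ := fun x => margA p x.1 * margB p x.2 with hq
  have hqt : ∀ x, ((E x.1 ⊗ₖ F x.2) * (ptraceB τ ⊗ₖ ptraceA τ)).trace = (q x : ℂ) := by
    intro x
    rw [← Matrix.mul_kronecker_mul, Matrix.trace_kronecker, hqA, hqB, hq]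
    push_cast; rfl
  -- weights
  set m : (A × B) × (A × B) → ℝ := fun x => t x.2 * Complex.normSq (C x.1 x.2) with hm
  have hm0 : ∀ x, 0 ≤ m x := fun x => mul_nonneg (ht _) (Complex.normSq_nonneg _)
  have hrow : ∀ x : A × B, ((∑ k, m (x, k) : ℝ) : ℂ) = (Uᴴ * τ * U) x x := by
    intro x
    have : Uᴴ * τ * U = C * Matrix.diagonal (fun x => (t x : ℂ)) * Cᴴ := by
      rw [hC, Matrix.conjTranspose_mul, Matrix.conjTranspose_conjTranspose]
      conv_lhs => rw [hτd]
      simp only [Matrix.mul_assoc]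
    rw [this, Matrix.mul_apply]
    push_cast [hm]
    refine Finset.sum_congr rfl fun k _ => ?_
    rw [Matrix.mul_diagonal, Matrix.conjTranspose_apply, ← Complex.mul_conj]
    simp only [RCLike.star_def]
    ring
  have hcol : ∀ k, ∑ x, Complex.normSq (C x k) = 1 := by
    intro k
    have h1 : (Cᴴ * C) k k = 1 := by
      rw [hC, Matrix.conjTranspose_mul, Matrix.conjTranspose_conjTranspose, Matrix.mul_assoc,
        ← Matrix.mul_assoc U, hU2, Matrix.one_mul, hW1, Matrix.one_apply_eq]
    rw [Matrix.mul_apply] at h1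
    have h2 : ((∑ x, Complex.normSq (C x k) : ℝ) : ℂ) = 1 := by
      rw [← h1]; push_cast
      refine Finset.sum_congr rfl fun x _ => ?_
      rw [Matrix.conjTranspose_apply, ← Complex.mul_conj]
      simp only [RCLike.star_def]
      ring
    exact_mod_cast h2
  have hA : ∀ i, ∑ j, ∑ k, m ((i, j), k) = a i := by
    intro i
    have h1 : ((∑ j, ∑ k, m ((i, j), k) : ℝ) : ℂ) = (a i : ℂ) := by
      rw [Complex.ofReal_sum]
      simp only [hrow]
      have h2 : ptraceB (Uᴴ * τ * U) = Matrix.diagonal (fun x => (a x : ℂ)) := by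
        have h3 : ptraceB (Uᴴ * τ * U) = UAᴴ * ptraceB τ * UA := by
          have := ptraceB_conj UAᴴ UBᴴ (by simpa using hUB2) τ
          simpa [hU, Matrix.conjTranspose_kronecker] using this
        rw [h3, had]
        simp only [Matrix.mul_assoc, hUA1, Matrix.mul_one]
        rw [← Matrix.mul_assoc, hUA1, Matrix.one_mul]
      have := congrFun (congrFun h2 i) i
      simpa [ptraceB] using this
    exact_mod_cast h1
  have hB : ∀ j, ∑ i, ∑ k, m ((i, j), k) = b j := by
    intro i
    have h1 : ((∑ j, ∑ k, m ((j, i), k) : ℝ) : ℂ) = (b i : ℂ) := by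
      rw [Complex.ofReal_sum]
      simp only [hrow]
      have h2 : ptraceA (Uᴴ * τ * U) = Matrix.diagonal (fun x => (b x : ℂ)) := by
        have h3 : ptraceA (Uᴴ * τ * U) = UBᴴ * ptraceA τ * UB := by
          have := ptraceA_conj UAᴴ UBᴴ (by simpa using hUA2) τ
          simpa [hU, Matrix.conjTranspose_kronecker] using this
        rw [h3, hbd]
        simp only [Matrix.mul_assoc, hUB1, Matrix.mul_one]
        rw [← Matrix.mul_assoc, hUB1, Matrix.one_mul]
      have := congrFun (congrFun h2 i) i
      simpa [ptraceA] using this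
    exact_mod_cast h1
  have ha0 : ∀ i, 0 ≤ a i := fun i => by
    rw [← hA]; exact Finset.sum_nonneg fun _ _ => Finset.sum_nonneg fun _ _ => hm0 _
  have hb0 : ∀ i, 0 ≤ b i := fun i => by
    rw [← hB]; exact Finset.sum_nonneg fun _ _ => Finset.sum_nonneg fun _ _ => hm0 _
  have ham : ∀ i j k, a i = 0 → m ((i, j), k) = 0 := by
    intro i j k h
    rw [← hA, Finset.sum_eq_zero_iff_of_nonneg
      (fun _ _ => Finset.sum_nonneg fun _ _ => hm0 _)] at h
    have := h j (Finset.mem_univ _)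
    rw [Finset.sum_eq_zero_iff_of_nonneg (fun _ _ => hm0 _)] at this
    exact this k (Finset.mem_univ _)
  have hbm : ∀ i j k, b j = 0 → m ((i, j), k) = 0 := by
    intro i j k h
    rw [← hB, Finset.sum_eq_zero_iff_of_nonneg
      (fun _ _ => Finset.sum_nonneg fun _ _ => hm0 _)] at h
    have := h i (Finset.mem_univ _)
    rw [Finset.sum_eq_zero_iff_of_nonneg (fun _ _ => hm0 _)] at this
    exact this k (Finset.mem_univ _)
  have hpA0 : ∀ i, 0 ≤ margA p i := fun i => Finset.sum_nonneg fun _ _ => hp0 _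
  have hpB0 : ∀ i, 0 ≤ margB p i := fun i => Finset.sum_nonneg fun _ _ => hp0 _
  have hpAm : ∀ i j, margA p i = 0 → p (i, j) = 0 := fun i j h =>
    (Finset.sum_eq_zero_iff_of_nonneg fun _ _ => hp0 _).1 h j (Finset.mem_univ _)
  have hpBm : ∀ i j, margB p j = 0 → p (i, j) = 0 := fun i j h =>
    (Finset.sum_eq_zero_iff_of_nonneg fun i _ => hp0 (i, j)).1 h i (Finset.mem_univ _)
  have hd0 : ∀ x, 0 ≤ d x := fun x => mul_nonneg (ha0 _) (hb0 _)
  have hq0 : ∀ x, 0 ≤ q x := fun x => mul_nonneg (hpA0 _) (hpB0 _)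
  have ht1 : ∑ k, t k = 1 := by
    have := hτ.2
    rw [hH.trace_eq_sum_eigenvalues, ← ht'] at this
    rw [← Complex.ofReal_inj, Complex.ofReal_sum, Complex.ofReal_one]
    exact this
  have hmt : ∀ k, ∑ x, m (x, k) = t k := by
    intro k
    simp only [hm, ← Finset.mul_sum, hcol, mul_one]
  have key := core_real2 (fun x : (A × B) × (A × B) => Complex.normSq (C x.1 x.2))
    (fun x => t x.2) (fun x => d x.1) p q (fun x => ht _) (fun x => hd0 _) hp0 hq0 ?_ ?_ ?_ ?_
  · have e1 : ∑ x : (A × B) × (A × B), t x.2 * Complex.normSq (C x.1 x.2) * Real.log (d x.1)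
        = ∑ i, a i * Real.log (a i) + ∑ j, b j * Real.log (b j) := by
      have : ∀ x : (A × B) × (A × B), t x.2 * Complex.normSq (C x.1 x.2) * Real.log (d x.1)
          = m x * Real.log (a x.1.1) + m x * Real.log (b x.1.2) := by
        rintro ⟨⟨i, j⟩, k⟩
        change m ((i, j), k) * Real.log (a i * b j) = m ((i, j), k) * Real.log (a i)
          + m ((i, j), k) * Real.log (b j)
        by_cases h1 : a i = 0
        · rw [ham i j k h1]; ring
        by_cases h2 : b j = 0
        · rw [hbm i j k h2]; ring
        rw [Real.log_mul h1 h2]; ring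
      simp only [this, Finset.sum_add_distrib]
      congr 1
      · simp only [Fintype.sum_prod_type (α₁ := A × B), Fintype.sum_prod_type (α₁ := A),
          ← Finset.sum_mul, ← hA]
      · simp only [Fintype.sum_prod_type (α₁ := A × B), Fintype.sum_prod_type_right (α₁ := A),
          ← Finset.sum_mul, ← hB]
    have e2 : ∑ x : (A × B) × (A × B), t x.2 * Complex.normSq (C x.1 x.2) * Real.log (t x.2)
        = ∑ k, t k * Real.log (t k) := by
      rw [Fintype.sum_prod_type_right]
      refine Finset.sum_congr rfl fun k _ => ?_
      change ∑ x, m (x, k) * Real.log (t k) = _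
      rw [← Finset.sum_mul, hmt k]
    have e3 : ∑ x, p x * Real.log (q x) = ∑ i, margA p i * Real.log (margA p i)
        + ∑ j, margB p j * Real.log (margB p j) := by
      have : ∀ x, p x * Real.log (q x)
          = p x * Real.log (margA p x.1) + p x * Real.log (margB p x.2) := by
        rintro ⟨i, j⟩
        change p (i, j) * Real.log (margA p i * margB p j) = _
        by_cases h1 : margA p i = 0
        · rw [hpAm i j h1]; ring
        by_cases h2 : margB p j = 0
        · rw [hpBm i j h2]; ring
        rw [Real.log_mul h1 h2]; ring
      simp only [this, Finset.sum_add_distrib]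
      congr 1
      · rw [Fintype.sum_prod_type]
        simp only [← Finset.sum_mul]; rfl
      · rw [Fintype.sum_prod_type_right]
        simp only [← Finset.sum_mul]; rfl
    rw [e1, e2, e3] at key
    have sh : ∀ {T : Type} [Fintype T] (f : T → ℝ),
        shannon f = -(∑ x, f x * Real.log (f x)) / Real.log 2 := by
      intro T _ f
      simp only [shannon, Real.logb, neg_div, Finset.sum_div, mul_div_assoc]
    have v1 : vnEntropy τ = shannon t := by
      simp only [vnEntropy, dif_pos hH, shannon, ht']
    have v2 : vnEntropy (ptraceB τ) = shannon a := by
      simp only [vnEntropy, dif_pos (ptraceB_herm hH), shannon, ha']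
    have v3 : vnEntropy (ptraceA τ) = shannon b := by
      simp only [vnEntropy, dif_pos (ptraceA_herm hH), shannon, hb']
    rw [mutInfo, classMI, v1, v2, v3]
    simp only [sh]
    rw [← add_div, ← sub_div, ← add_div, ← sub_div]
    have := Real.log_pos (one_lt_two)
    refine div_le_div_of_nonneg_right ?_ this.le
    linarith
  · rintro ⟨⟨i, j⟩, k⟩ h
    rcases mul_eq_zero.1 h with h | h
    · exact ham i j k h
    · exact hbm i j k h
  · rintro ⟨i, j⟩ h
    rcases mul_eq_zero.1 h with h | h
    · exact hpAm i j h
    · exact hpBm i j h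
  · rw [hp1, ← ht1, Fintype.sum_prod_type_right]
    exact Finset.sum_congr rfl fun k _ => hmt k
  · intro s hs
    set c : ι × κ → ℝ := fun x => p x / (q x + s * p x) with hc
    set P : ι × κ → Matrix (A × B) (A × B) ℂ := fun x => E x.1 ⊗ₖ F x.2 with hP
    have hPV : IsPVM P := hE.kron hF
    set Q : Matrix (A × B) (A × B) ℂ := ∑ x, (c x : ℂ) • P x with hQ
    have hQh : Qᴴ = Q := by
      simp [hQ, Matrix.conjTranspose_sum, Matrix.conjTranspose_smul, hPV.herm]
    have hQQ : Q * Q = ∑ x, ((c x ^ 2 : ℝ) : ℂ) • P x := by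
      simp only [hQ, Finset.sum_mul_sum, Matrix.smul_mul, Matrix.mul_smul, hPV.mul, smul_ite,
        smul_zero, Finset.sum_ite_eq, Finset.mem_univ, if_true, smul_smul]
      refine Finset.sum_congr rfl fun x _ => ?_
      push_cast; rw [sq]
    set M : Matrix (A × B) (A × B) ℂ := Uᴴ * Q * W with hM
    have t1 : (M * Matrix.diagonal (fun x => (t x : ℂ)) * Cᴴ).trace
        = ((∑ x, c x * p x : ℝ) : ℂ) := by
      have : M * Matrix.diagonal (fun x => (t x : ℂ)) * Cᴴ = Uᴴ * (Q * τ * U) := by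
        conv_rhs => rw [hτd]
        rw [hM, hC, Matrix.conjTranspose_mul, Matrix.conjTranspose_conjTranspose]
        simp only [Matrix.mul_assoc]
      rw [this, Matrix.trace_mul_comm, Matrix.mul_assoc, hU2, Matrix.mul_one, hQ,
        Finset.sum_mul, Matrix.trace_sum]
      push_cast
      refine Finset.sum_congr rfl fun x _ => ?_
      rw [Matrix.smul_mul, Matrix.trace_smul, hpt, smul_eq_mul]
    have t2 : (M * Matrix.diagonal (fun x => (t x : ℂ)) * Mᴴ).trace
        = ((∑ x, c x ^ 2 * p x : ℝ) : ℂ) := by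
      have : M * Matrix.diagonal (fun x => (t x : ℂ)) * Mᴴ = Uᴴ * (Q * τ * Q * U) := by
        conv_rhs => rw [hτd]
        rw [hM, Matrix.conjTranspose_mul, Matrix.conjTranspose_mul,
          Matrix.conjTranspose_conjTranspose, hQh]
        simp only [Matrix.mul_assoc]
      rw [this, Matrix.trace_mul_comm, Matrix.mul_assoc, hU2, Matrix.mul_one,
        Matrix.trace_mul_comm, ← Matrix.mul_assoc, hQQ,
        Finset.sum_mul, Matrix.trace_sum]
      push_cast
      refine Finset.sum_congr rfl fun x _ => ?_
      rw [Matrix.smul_mul, Matrix.trace_smul, hpt, smul_eq_mul]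
      try simp only [Complex.ofReal_pow]
    have t3 : (Mᴴ * Matrix.diagonal (fun x => (d x : ℂ)) * M).trace
        = ((∑ x, c x ^ 2 * q x : ℝ) : ℂ) := by
      have : Mᴴ * Matrix.diagonal (fun x => (d x : ℂ)) * M
          = Wᴴ * (Q * (ptraceB τ ⊗ₖ ptraceA τ) * Q * W) := by
        rw [hσ, hM, Matrix.conjTranspose_mul, Matrix.conjTranspose_mul,
          Matrix.conjTranspose_conjTranspose, hQh]
        simp only [Matrix.mul_assoc]
      rw [this, Matrix.trace_mul_comm, Matrix.mul_assoc, hW2, Matrix.mul_one,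
        Matrix.trace_mul_comm, ← Matrix.mul_assoc, hQQ,
        Finset.sum_mul, Matrix.trace_sum]
      push_cast
      refine Finset.sum_congr rfl fun x _ => ?_
      rw [Matrix.smul_mul, Matrix.trace_smul, hqt, smul_eq_mul]
      try simp only [Complex.ofReal_pow]
    rw [trace_right] at t1 t2
    rw [trace_left] at t3
    have t3' := Complex.ofReal_injective t3
    have t1' := congrArg Complex.re t1
    have t2' := congrArg Complex.re t2
    simp only [Complex.re_sum, Complex.re_ofReal_mul, Complex.ofReal_re] at t1' t2'
    have hz : ∀ z : ℂ, (z * star z).re = Complex.normSq z := by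
      intro z; rw [Complex.normSq_apply]; simp
    simp only [hz] at t2'
    calc ∑ x, p x ^ 2 / (q x + s * p x)
        = 2 * (∑ x, c x * p x) - (∑ x, c x ^ 2 * q x + s * ∑ x, c x ^ 2 * p x) := by
          rw [Finset.mul_sum, Finset.mul_sum, ← Finset.sum_add_distrib, ← Finset.sum_sub_distrib]
          refine Finset.sum_congr rfl fun x _ => ?_
          simp only [hc]
          by_cases h0 : q x + s * p x = 0
          · simp [h0]
          · field_simp; ring
      _ = ∑ x : (A × B) × (A × B), (2 * (t x.2 * (M x.1 x.2 * star (C x.1 x.2)).re)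
            - (d x.1 + s * t x.2) * Complex.normSq (M x.1 x.2)) := by
          rw [Finset.sum_sub_distrib, ← Finset.mul_sum, t1', ← t2', ← t3']
          congr 1
          rw [Finset.mul_sum, ← Finset.sum_add_distrib]
          exact Finset.sum_congr rfl fun x _ => by ring
      _ ≤ _ := by
          refine Finset.sum_le_sum fun x _ => ?_
          have h1 := hd0 x.1
          have h2 := ht x.2
          refine pointwise_ineq _ _ _ _ (by positivity) fun h => ?_
          have h3 : s * t x.2 = 0 := by
            have : 0 ≤ s * t x.2 := by positivity
            linarith
          exact (mul_eq_zero.1 h3).resolve_left hs.ne'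

lemma mutInfo_cc {I J A B : Type} [Fintype I] [Fintype J] [Fintype A] [Fintype B]
    [DecidableEq I] [DecidableEq J] [DecidableEq A] [DecidableEq B]
    (K : Matrix A I ℂ) (L : Matrix B J ℂ) (hK : Kᴴ * K = 1) (hL : Lᴴ * L = 1)
    (p : I × J → ℝ) :
    mutInfo ((K ⊗ₖ L) * Matrix.diagonal (fun x => (p x : ℂ)) * (K ⊗ₖ L)ᴴ) = classMI p := by
  have hKL : (K ⊗ₖ L)ᴴ * (K ⊗ₖ L) = 1 := by
    rw [Matrix.conjTranspose_kronecker, ← Matrix.mul_kronecker_mul, hK, hL,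
      Matrix.one_kronecker_one]
  have hB : ptraceB (Matrix.diagonal (fun x : I × J => (p x : ℂ)))
      = Matrix.diagonal (fun x => (margA p x : ℂ)) := by
    ext i i'
    by_cases h : i = i' <;> simp [ptraceB, margA, Matrix.diagonal_apply, h]
  have hA : ptraceA (Matrix.diagonal (fun x : I × J => (p x : ℂ)))
      = Matrix.diagonal (fun x => (margB p x : ℂ)) := by
    ext i i'
    by_cases h : i = i' <;> simp [ptraceA, margB, Matrix.diagonal_apply, h]
  rw [mutInfo, classMI, ptraceB_conj K L hL, ptraceA_conj K L hK, hA, hB,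
    vnEntropy_isom _ hKL, vnEntropy_isom _ hK, vnEntropy_isom _ hL]

/-- Embedding of a single-copy operator at position `k`. -/
def embk {I : Type} [DecidableEq I] {n : ℕ} (k : Fin n)
    (X : Matrix I I ℂ) : Matrix (Fin n → I) (Fin n → I) ℂ :=
  (X ⊗ₖ (1 : Matrix ({j // j ≠ k} → I) ({j // j ≠ k} → I) ℂ)).submatrix
    (Equiv.funSplitAt k I) (Equiv.funSplitAt k I)

lemma embk_mul {I : Type} [Fintype I] [DecidableEq I] {n : ℕ} (k : Fin n)
    (X Y : Matrix I I ℂ) : embk k X * embk k Y = embk k (X * Y) := by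
  unfold embk
  rw [Matrix.submatrix_mul_equiv, ← Matrix.mul_kronecker_mul, Matrix.mul_one]

lemma embk_star {I : Type} [Fintype I] [DecidableEq I] {n : ℕ} (k : Fin n)
    (X : Matrix I I ℂ) : (embk k X)ᴴ = embk k Xᴴ := by
  unfold embk
  rw [Matrix.conjTranspose_submatrix, Matrix.conjTranspose_kronecker, Matrix.conjTranspose_one]

lemma embk_one {I : Type} [Fintype I] [DecidableEq I] {n : ℕ} (k : Fin n) :
    embk k (1 : Matrix I I ℂ) = 1 := by
  unfold embk
  rw [Matrix.one_kronecker_one, Matrix.submatrix_one_equiv]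

lemma embk_pvm {I : Type} [Fintype I] [DecidableEq I] {n : ℕ} (k : Fin n)
    (E : I → Matrix I I ℂ) (hE : IsPVM E) : IsPVM (fun i => embk k (E i)) where
  herm i := by rw [embk_star, hE.herm]
  mul i j := by
    rw [embk_mul, hE.mul]
    split_ifs
    · rfl
    · ext; simp [embk]
  sum := by
    rw [← embk_one k, ← hE.sum]
    ext f g
    simp [embk, Matrix.sum_apply, Finset.sum_mul]

lemma unit_pvm {I : Type} [Fintype I] [DecidableEq I] (U : Matrix I I ℂ) (h1 : Uᴴ * U = 1)
    (h2 : U * Uᴴ = 1) : IsPVM (fun i => U * Matrix.single i i (1 : ℂ) * Uᴴ) where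
  herm i := by
    simp [Matrix.conjTranspose_mul, Matrix.conjTranspose_single, Matrix.mul_assoc]
  mul i j := by
    have : U * Matrix.single i i (1 : ℂ) * Uᴴ * (U * Matrix.single j j (1 : ℂ) * Uᴴ)
        = U * (Matrix.single i i (1 : ℂ) * (Uᴴ * U) * Matrix.single j j (1 : ℂ)) * Uᴴ := by
      simp only [Matrix.mul_assoc]
    rw [this, h1, Matrix.mul_one]
    split_ifs with h
    · subst h; simp
    · rw [Matrix.single_mul_single_of_ne _ _ _ _ h]; simp
  sum := by
    rw [← Finset.sum_mul, ← Finset.mul_sum, Matrix.sum_single_one, Matrix.mul_one, h2]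

lemma embk_sum {I : Type} [Fintype I] [DecidableEq I] {n : ℕ} (k : Fin n)
    (X : Matrix I I ℂ) (f : Fin n → I) (h : (Fin n → I) → ℂ) :
    ∑ f', embk k X f' f * h f' = ∑ a, X a (f k) * h (Function.update f k a) := by
  rw [← (Equiv.funSplitAt k I).symm.sum_comp, Fintype.sum_prod_type]
  refine Finset.sum_congr rfl fun a _ => ?_
  have e2 : Equiv.funSplitAt k I f = (f k, fun j : {j // j ≠ k} => f j) := rfl
  refine (Finset.sum_eq_single (fun j : {j // j ≠ k} => f j) ?_ ?_).trans ?_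
  · intro g _ hg
    simp only [embk, Matrix.submatrix_apply, Equiv.apply_symm_apply, e2,
      Matrix.kroneckerMap_apply, Matrix.one_apply_ne hg, mul_zero, zero_mul]
  · simp
  · have e1 : (Equiv.funSplitAt k I).symm (a, fun j : {j // j ≠ k} => f j) = Function.update f k a := by
      ext j
      by_cases hj : j = k
      · subst hj; simp
      · simp [hj]
    rw [← e1]
    simp only [embk, Matrix.submatrix_apply, Equiv.apply_symm_apply, e2,
      Matrix.kroneckerMap_apply, Matrix.one_apply_eq, mul_one]

lemma sum_move4 {G A B X Y : Type} [Fintype G] [Fintype A] [Fintype B] [Fintype X] [Fintype Y]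
    (H : G → A → B → X → Y → ℂ) :
    ∑ g, ∑ a, ∑ b, ∑ x, ∑ y, H g a b x y = ∑ a, ∑ b, ∑ x, ∑ y, ∑ g, H g a b x y := by
  rw [Finset.sum_comm]
  refine Finset.sum_congr rfl fun a _ => ?_
  rw [Finset.sum_comm]
  refine Finset.sum_congr rfl fun b _ => ?_
  rw [Finset.sum_comm]
  refine Finset.sum_congr rfl fun x _ => ?_
  rw [Finset.sum_comm]

lemma trace_copy {I J : Type} [Fintype I] [Fintype J] [DecidableEq I] [DecidableEq J] {n : ℕ}
    (k : Fin n) (X : Matrix I I ℂ) (Y : Matrix J J ℂ)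
    (τ : Matrix ((Fin n → I) × (Fin n → J)) ((Fin n → I) × (Fin n → J)) ℂ) :
    ((embk k X ⊗ₖ embk k Y) * τ).trace = ((X ⊗ₖ Y) * copyMarginal τ k).trace := by
  have h1 : ((embk k X ⊗ₖ embk k Y) * τ).trace = ∑ f, ∑ g, ∑ a, ∑ b,
      X a (f k) * Y b (g k) * τ (f, g) (Function.update f k a, Function.update g k b) := by
    rw [Matrix.trace_mul_comm]
    simp only [Matrix.trace, Matrix.diag_apply, Matrix.mul_apply, Fintype.sum_prod_type,
      Matrix.kroneckerMap_apply]
    refine Finset.sum_congr rfl fun f _ => Finset.sum_congr rfl fun g _ => ?_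
    have s1 : ∀ f', ∑ g', embk k Y g' g * τ (f, g) (f', g')
        = ∑ b, Y b (g k) * τ (f, g) (f', Function.update g k b) :=
      fun f' => embk_sum k Y g (fun g' => τ (f, g) (f', g'))
    have s2 := embk_sum k X f (fun f' => ∑ b, Y b (g k) * τ (f, g) (f', Function.update g k b))
    refine Eq.trans ?_ (s2.trans ?_)
    · refine Finset.sum_congr rfl fun f' _ => ?_
      rw [← s1, Finset.mul_sum]
      exact Finset.sum_congr rfl fun g' _ => by ring
    · refine Finset.sum_congr rfl fun a _ => ?_
      rw [Finset.mul_sum]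
      exact Finset.sum_congr rfl fun b _ => by ring
  rw [h1]
  have h2 : ∀ f g, ∑ a, ∑ b,
      X a (f k) * Y b (g k) * τ (f, g) (Function.update f k a, Function.update g k b)
      = ∑ a, ∑ b, ∑ x, ∑ y, X a x * Y b y * (if f k = x ∧ g k = y then
        τ (f, g) (Function.update f k a, Function.update g k b) else 0) := by
    intro f g
    refine Finset.sum_congr rfl fun a _ => Finset.sum_congr rfl fun b _ => ?_
    simp [ite_and]
  simp only [h2]
  simp only [Matrix.trace, Matrix.diag_apply, Matrix.mul_apply, Fintype.sum_prod_type,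
      Matrix.kroneckerMap_apply, copyMarginal, Matrix.of_apply, Finset.mul_sum]
  exact (Finset.sum_congr rfl fun f _ => sum_move4 _).trans (sum_move4 _)

/-- Broadcasting isometry. -/
def bcast {I : Type} (n : ℕ) (U : Matrix I I ℂ) : Matrix (Fin n → I) I ℂ :=
  Matrix.of fun f i => ∏ l, U (f l) i

lemma bcast_isom {I : Type} [Fintype I] [DecidableEq I] (n : ℕ) (hn : 1 ≤ n)
    (U : Matrix I I ℂ) (h : Uᴴ * U = 1) : (bcast n U)ᴴ * bcast n U = 1 := by
  ext i j
  have h1 : ((bcast n U)ᴴ * bcast n U) i j = ∏ _l : Fin n, (Uᴴ * U) i j := by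
    simp only [Matrix.mul_apply, bcast, Matrix.conjTranspose_apply, Matrix.of_apply, star_prod,
      ← Finset.prod_mul_distrib]
    rw [Finset.prod_univ_sum, Fintype.piFinset_univ]
  rw [h1, h]
  by_cases hij : i = j
  · rw [hij, Matrix.one_apply_eq]; simp
  · simp [Matrix.one_apply_ne hij]; omega

lemma bcast_marg {I : Type} [Fintype I] [DecidableEq I] (n : ℕ) (k : Fin n)
    (U : Matrix I I ℂ) (h : Uᴴ * U = 1) (x y i : I) :
    ∑ f : Fin n → I, (if f k = x then
      bcast n U f i * star (bcast n U (Function.update f k y) i) else 0) = U x i * star (U y i) := by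
  have h0 : ∑ a, U a i * star (U a i) = 1 := by
    have := congrFun (congrFun h i) i
    rw [Matrix.mul_apply, Matrix.one_apply_eq] at this
    rw [← this]
    exact Finset.sum_congr rfl fun a _ => by rw [Matrix.conjTranspose_apply, mul_comm]
  have h1 : ∀ f : Fin n → I, (if f k = x then
      bcast n U f i * star (bcast n U (Function.update f k y) i) else 0)
      = ∏ l, (if l = k then (if f l = x then U x i * star (U y i) else 0)
          else U (f l) i * star (U (f l) i)) := by
    intro f
    rw [← Finset.mul_prod_erase _ _ (Finset.mem_univ k)]
    by_cases hf : f k = x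
    · simp only [hf, if_true, bcast, Matrix.of_apply]
      rw [← Finset.mul_prod_erase _ _ (Finset.mem_univ k), ← Finset.mul_prod_erase _
        (fun l => U (Function.update f k y l) i) (Finset.mem_univ k), hf, Function.update_self,
        star_mul', mul_mul_mul_comm, star_prod, ← Finset.prod_mul_distrib]
      congr 1
      refine Finset.prod_congr rfl fun l hl => ?_
      have := Finset.ne_of_mem_erase hl
      simp [this]
    · simp [hf]
  simp only [h1]
  have h2 := Finset.prod_univ_sum (fun _ : Fin n => (Finset.univ : Finset I))
    (fun l a => if l = k then (if a = x then U x i * star (U y i) else 0)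
          else U a i * star (U a i))
  rw [Fintype.piFinset_univ] at h2
  rw [← h2, ← Finset.mul_prod_erase _ _ (Finset.mem_univ k), Finset.prod_eq_one]
  · simp
  · intro l hl
    simp only [Finset.ne_of_mem_erase hl, if_false, h0]

lemma bcast_copy {I J : Type} [Fintype I] [Fintype J] [DecidableEq I] [DecidableEq J]
    (p : I × J → ℝ) (n : ℕ) (k : Fin n) (UA : Matrix I I ℂ) (UB : Matrix J J ℂ)
    (hA : UAᴴ * UA = 1) (hB : UBᴴ * UB = 1) :
    copyMarginal ((bcast n UA ⊗ₖ bcast n UB) * Matrix.diagonal (fun x => (p x : ℂ))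
      * (bcast n UA ⊗ₖ bcast n UB)ᴴ) k
    = (UA ⊗ₖ UB) * Matrix.diagonal (fun x => (p x : ℂ)) * (UA ⊗ₖ UB)ᴴ := by
  ext x y
  have h1 : ∀ f g f' g', ((bcast n UA ⊗ₖ bcast n UB) * Matrix.diagonal (fun x => (p x : ℂ))
      * (bcast n UA ⊗ₖ bcast n UB)ᴴ) (f, g) (f', g') = ∑ z, (p z : ℂ) *
        ((bcast n UA f z.1 * star (bcast n UA f' z.1)) *
          (bcast n UB g z.2 * star (bcast n UB g' z.2))) := by
    intro f g f' g'
    rw [Matrix.mul_apply]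
    refine Finset.sum_congr rfl fun z _ => ?_
    rw [Matrix.mul_diagonal, Matrix.conjTranspose_apply, Matrix.kroneckerMap_apply,
      Matrix.kroneckerMap_apply, star_mul']
    ring
  simp only [copyMarginal, Matrix.of_apply, h1]
  have h2 : ((UA ⊗ₖ UB) * Matrix.diagonal (fun x => (p x : ℂ)) * (UA ⊗ₖ UB)ᴴ) x y
      = ∑ z, (p z : ℂ) * ((UA x.1 z.1 * star (UA y.1 z.1)) * (UB x.2 z.2 * star (UB y.2 z.2))) := by
    rw [Matrix.mul_apply]
    refine Finset.sum_congr rfl fun z _ => ?_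
    rw [Matrix.mul_diagonal, Matrix.conjTranspose_apply, Matrix.kroneckerMap_apply,
      Matrix.kroneckerMap_apply, star_mul']
    ring
  rw [h2]
  have h3 : ∀ z : I × J, (UA x.1 z.1 * star (UA y.1 z.1)) * (UB x.2 z.2 * star (UB y.2 z.2))
      = ∑ f : Fin n → I, ∑ g : Fin n → J, (if f k = x.1 then
        bcast n UA f z.1 * star (bcast n UA (Function.update f k y.1) z.1) else 0) *
        (if g k = x.2 then
        bcast n UB g z.2 * star (bcast n UB (Function.update g k y.2) z.2) else 0) := by
    intro z
    rw [← bcast_marg n k UA hA x.1 y.1 z.1, ← bcast_marg n k UB hB x.2 y.2 z.2,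
      Finset.sum_mul_sum]
  simp only [h3, Finset.mul_sum]
  refine Eq.trans ?_ (Finset.sum_comm (s := (Finset.univ : Finset (Fin n → I))))
  refine Finset.sum_congr rfl fun f _ => ?_
  refine Eq.trans ?_ (Finset.sum_comm (s := (Finset.univ : Finset (Fin n → J))))
  refine Finset.sum_congr rfl fun g _ => ?_
  by_cases h4 : f k = x.1 <;> by_cases h5 : g k = x.2 <;> simp [h4, h5]

/-- for a classical-classical state ρ, (I_b)_n(ρ) = I(ρ): some
n-copy broadcast state attains I(ρ), and no broadcast copy achieves less. -/
theorem stmt_7 {I J : Type} [Fintype I] [Fintype J] [DecidableEq I] [DecidableEq J]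
    (p : I × J → ℝ) (hp : IsProbDist p)
    (UA : Matrix I I ℂ) (UB : Matrix J J ℂ)
    (hUA : UA ∈ Matrix.unitaryGroup I ℂ) (hUB : UB ∈ Matrix.unitaryGroup J ℂ)
    (ρ : Matrix (I × J) (I × J) ℂ)
    (hρ : ρ = (UA ⊗ₖ UB) * Matrix.diagonal (fun x => (p x : ℂ)) * (UA ⊗ₖ UB)ᴴ)
    (n : ℕ) (hn : 1 ≤ n) :
    (∃ τ, IsBroadcast n τ ρ ∧ mutInfo τ = mutInfo ρ) ∧
    (∀ τ, IsBroadcast n τ ρ → mutInfo ρ ≤ mutInfo τ) ∧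
    Ib n ρ = mutInfo ρ := by
  have hUA1 : UAᴴ * UA = 1 := Matrix.mem_unitaryGroup_iff'.1 hUA
  have hUA2 : UA * UAᴴ = 1 := Matrix.mem_unitaryGroup_iff.1 hUA
  have hUB1 : UBᴴ * UB = 1 := Matrix.mem_unitaryGroup_iff'.1 hUB
  have hUB2 : UB * UBᴴ = 1 := Matrix.mem_unitaryGroup_iff.1 hUB
  have hI : mutInfo ρ = classMI p := by
    rw [hρ]; exact mutInfo_cc UA UB hUA1 hUB1 p
  have hex : ∃ τ, IsBroadcast n τ ρ ∧ mutInfo τ = mutInfo ρ := by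
    have hKA := bcast_isom n hn UA hUA1
    have hKB := bcast_isom n hn UB hUB1
    refine ⟨(bcast n UA ⊗ₖ bcast n UB) * Matrix.diagonal (fun x => (p x : ℂ))
      * (bcast n UA ⊗ₖ bcast n UB)ᴴ, ⟨⟨?_, ?_⟩, fun k => ?_⟩, ?_⟩
    · apply Matrix.PosSemidef.mul_mul_conjTranspose_same
      rw [Matrix.posSemidef_diagonal_iff]
      intro x
      exact_mod_cast hp.1 x
    · rw [Matrix.trace_mul_comm, ← Matrix.mul_assoc, Matrix.conjTranspose_kronecker,
        ← Matrix.mul_kronecker_mul, hKA, hKB, Matrix.one_kronecker_one, Matrix.one_mul,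
        Matrix.trace_diagonal]
      exact_mod_cast hp.2
    · rw [hρ]; exact bcast_copy p n k UA UB hUA1 hUB1
    · rw [hI]; exact mutInfo_cc _ _ hKA hKB p
  have hlow : ∀ τ, IsBroadcast n τ ρ → mutInfo ρ ≤ mutInfo τ := by
    intro τ hτ
    rw [hI]
    refine meas_mono (embk_pvm ⟨0, hn⟩ _ (unit_pvm UA hUA1 hUA2))
      (embk_pvm ⟨0, hn⟩ _ (unit_pvm UB hUB1 hUB2)) τ hτ.1 p hp ?_
    rintro ⟨i, j⟩
    rw [trace_copy, hτ.2, hρ, Matrix.mul_kronecker_mul, Matrix.mul_kronecker_mul,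
      ← Matrix.conjTranspose_kronecker]
    have hU1 : (UA ⊗ₖ UB)ᴴ * (UA ⊗ₖ UB) = 1 := by
      rw [Matrix.conjTranspose_kronecker, ← Matrix.mul_kronecker_mul, hUA1, hUB1,
        Matrix.one_kronecker_one]
    generalize UA ⊗ₖ UB = U at hU1
    rw [Matrix.trace_mul_comm]
    have : U * Matrix.diagonal (fun x => (p x : ℂ)) * Uᴴ
        * (U * (Matrix.single i i (1 : ℂ) ⊗ₖ Matrix.single j j (1 : ℂ)) * Uᴴ)
        = U * (Matrix.diagonal (fun x => (p x : ℂ)) * (Uᴴ * U)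
          * (Matrix.single i i (1 : ℂ) ⊗ₖ Matrix.single j j (1 : ℂ)) * Uᴴ) := by
      simp only [Matrix.mul_assoc]
    rw [this, hU1, Matrix.mul_one, Matrix.trace_mul_comm, Matrix.mul_assoc, hU1, Matrix.mul_one,
      Matrix.single_kronecker_single, mul_one]
    simp [Matrix.trace, Matrix.diagonal_mul, Matrix.single_apply]
  refine ⟨hex, hlow, ?_⟩
  obtain ⟨τ, hτ, hτe⟩ := hex
  refine IsLeast.csInf_eq ⟨⟨τ, hτ, hτe.symm⟩, ?_⟩
  rintro x ⟨σ, hσ, rfl⟩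
  exact hlow σ hσ

end
end
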